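/- Let α ∈ (0,1). There is a constant b_α > 0, depending only on α, such that for every pair (u,w) in the graph of the operator A = (d/dx)D^α one has |∫₀¹ w(x) · conj(u(x)) dx| ≤ b_α N_{(1+α)/2}(u)², i.e. |⟨Au,u⟩_{L²(0,1)}| ≤ b_α ‖u‖²_{H^{(1+α)/2}(0,1)}. -/

import Mathlib

/-!
For `(u, w)` in the graph of `A`, put `G = u' = I^α w` and extend `u` by constants to a function `U`
on the line. Integration by parts (using `u 1 = 0`) and the semigroup law `I^(1-α) G = I¹ w` turn
`⟨w, u⟩` into a constant multiple of the quadratic form `∬ (x - p)₊^(-α) G(p) conj (G x)`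
(`form_identity`; the semigroup law is the Beta integral, `integral_kap_rl`).

This form cannot be bounded absolutely by the fractional norm, since `G` is only of negative order
there. Cancellation is brought out by the superposition formula `lintegral_conf`,
`(x - p)₊^(-α) = const * ∫∫∫ over a < p < m < x < b of (b - a)^(-α-3) da dm db`:
after Fubini the integrals of `G` over `(a, m)` and `(m, b)` are increments of `U`, and the form is
`∫∫∫ over a < m < b of (b - a)^(-α-3) (U m - U a) conj (U b - U m)`. By the inequality
`2 s t ≤ s² + t²` and integration of the unused variable this is at most a multiple of
`∬ |U m - U a|² |m - a|^(-α-2)` over `m ∈ (0,1)`, `a ∈ ℝ` (`triple_bound`). The part with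
`a ∈ (0,1)` is the Gagliardo seminorm of order `(1 + α) / 2`; the parts with `a < 0` and `a > 1` are
boundary terms `∫ |U m - U 0|² m^(-α-1)` and its mirror image, controlled by the fractional Hardy
inequality `hardy`. The absolute convergence needed for Fubini holds because `G ∈ L²(0,1)`
(`rl_sq_lt_top`), which also makes the Gagliardo seminorm of `u` finite (`IsPrim.gag_lt_top`).

All estimates are carried out with `ℝ≥0∞`-valued integrals over `ℝ`, the order constraints being
encoded by indicator functions `kap 0`.
-/

open MeasureTheory Set Filter

/-- Riemann–Liouville fractional integral `I^γ f` on `(0,1)` (complex-valued),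
with the convention `I⁰ f = f`. -/
noncomputable def fracInt (γ : ℝ) (f : ℝ → ℂ) (x : ℝ) : ℂ :=
  if γ = 0 then f x
  else ((Real.Gamma γ)⁻¹ : ℝ) • ∫ p in (0:ℝ)..x, (((x - p) ^ (γ - 1) : ℝ) : ℂ) * f p

/-- `f` is square integrable (and a.e. strongly measurable) on `(0,1)`: `f ∈ L²(0,1)`. -/
def SqIntOn (f : ℝ → ℂ) : Prop :=
  MeasureTheory.AEStronglyMeasurable f (MeasureTheory.volume.restrict (Set.Ioc (0:ℝ) 1)) ∧
  MeasureTheory.IntegrableOn (fun x => ‖f x‖ ^ 2) (Set.Ioc (0:ℝ) 1)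

/-- `(u, w)` lies in the graph of `A = (d/dx) D^α`:  `u` is absolutely continuous on `[0,1]`
with `u' = I^α w` a.e., `u(1) = 0`, and `w ∈ L²(0,1)`; then `A u = w`. -/
def InGraphA (α : ℝ) (u w : ℝ → ℂ) : Prop :=
  u 1 = 0 ∧ SqIntOn w ∧
  IntervalIntegrable (fracInt α w) MeasureTheory.volume 0 1 ∧
  ∀ x ∈ Set.Icc (0:ℝ) 1, u x = u 0 + ∫ t in (0:ℝ)..x, fracInt α w t

/-- Square of the `L²(0,1)` norm. -/
noncomputable def L2normSq (f : ℝ → ℂ) : ℝ := ∫ x in (0:ℝ)..1, ‖f x‖ ^ 2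

/-- Square of the Gagliardo seminorm of order `s` on `(0,1)`. -/
noncomputable def sobSeminormSq (s : ℝ) (u : ℝ → ℂ) : ℝ :=
  ∫ x in (0:ℝ)..1, ∫ y in (0:ℝ)..1, ‖u x - u y‖ ^ 2 / |x - y| ^ (1 + 2 * s)

/-- Square of the fractional Sobolev `H^s(0,1)` norm `N_s(u)`. -/
noncomputable def sobNormSq (s : ℝ) (u : ℝ → ℂ) : ℝ :=
  L2normSq u + sobSeminormSq s u

/-! ### Truncated powers -/

/-- The truncated power `z₊^γ`, equal to `z ^ γ` for `z > 0` and to `0` for `z ≤ 0`.  In particular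
`kap 0` is the indicator function of `(0, ∞)`, used below to encode order constraints. -/
noncomputable def kap (γ z : ℝ) : ℝ := if 0 < z then z ^ γ else 0

/-- The truncated power `z₊^γ` as an extended nonnegative real. -/
noncomputable def ekap (γ z : ℝ) : ENNReal := ENNReal.ofReal (kap γ z)

lemma kap_nonneg (γ z : ℝ) : 0 ≤ kap γ z := by
  unfold kap; split_ifs with h
  · positivity
  · exact le_rfl

@[fun_prop] lemma measurable_kap (γ : ℝ) : Measurable (kap γ) := by
  unfold kap
  exact Measurable.ite measurableSet_Ioi (by fun_prop) measurable_const

@[fun_prop] lemma measurable_ekap (γ : ℝ) : Measurable (ekap γ) :=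
  (measurable_kap γ).ennreal_ofReal

lemma kap_of_pos (γ : ℝ) {z : ℝ} (h : 0 < z) : kap γ z = z ^ γ := if_pos h

lemma kap_of_nonpos (γ : ℝ) {z : ℝ} (h : z ≤ 0) : kap γ z = 0 := if_neg h.not_gt

lemma ekap_of_pos (γ : ℝ) {z : ℝ} (h : 0 < z) : ekap γ z = ENNReal.ofReal (z ^ γ) := by
  rw [ekap, kap_of_pos γ h]

lemma ekap_of_nonpos (γ : ℝ) {z : ℝ} (h : z ≤ 0) : ekap γ z = 0 := by
  rw [ekap, kap_of_nonpos γ h, ENNReal.ofReal_zero]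

lemma ekap_zero_of_pos {z : ℝ} (h : 0 < z) : ekap 0 z = 1 := by simp [ekap_of_pos 0 h]

lemma ekap_mul (β γ z : ℝ) : ekap β z * ekap γ z = ekap (β + γ) z := by
  rcases lt_or_ge 0 z with h | h
  · rw [ekap_of_pos _ h, ekap_of_pos _ h, ekap_of_pos _ h, ← ENNReal.ofReal_mul (by positivity),
      Real.rpow_add h]
  · simp [ekap_of_nonpos _ h]

lemma ekap_one_eq {z : ℝ} (h : 0 ≤ z) : ekap 1 z = ENNReal.ofReal z := by
  rcases h.lt_or_eq with h | h
  · simp [ekap_of_pos _ h]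
  · simp [← h, ekap_of_nonpos]

lemma enorm_kap (γ z : ℝ) : ‖((kap γ z : ℝ) : ℂ)‖ₑ = ekap γ z := by
  rw [ekap, ← ofReal_norm, Complex.norm_real, Real.norm_of_nonneg (kap_nonneg _ _)]

lemma lintegral_ekap_tail {γ : ℝ} (hγ : γ < -1) {c : ℝ} (hc : 0 < c) :
    ∫⁻ z, ekap 0 (z - c) * ekap γ z = ENNReal.ofReal (1 / (-γ - 1)) * ekap (γ + 1) c := by
  have h1 : ∀ z, ekap 0 (z - c) * ekap γ z
      = (Ioi c).indicator (fun z => ENNReal.ofReal (z ^ γ)) z := by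
    intro z
    by_cases hz : c < z
    · rw [indicator_of_mem (by exact hz), ekap_zero_of_pos (by linarith),
        ekap_of_pos _ (by linarith), one_mul]
    · rw [indicator_of_notMem (by exact hz), ekap_of_nonpos _ (by linarith), zero_mul]
  simp_rw [h1]
  rw [lintegral_indicator measurableSet_Ioi,
    ← ofReal_integral_eq_lintegral_ofReal (integrableOn_Ioi_rpow_of_lt hγ hc)
      ((ae_restrict_iff' measurableSet_Ioi).2 (Eventually.of_forall fun z hz =>
        Real.rpow_nonneg (hc.trans hz).le _)),
    integral_Ioi_rpow_of_lt hγ hc, ekap_of_pos _ hc,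
    ← ENNReal.ofReal_mul (by apply div_nonneg <;> linarith)]
  congr 1
  have : γ + 1 ≠ 0 := by linarith
  have : -γ - 1 ≠ 0 := by linarith
  field_simp
  ring

lemma lintegral_ekap_right {γ : ℝ} (hγ : γ < -1) {a m : ℝ} (h : a < m) :
    ∫⁻ b, ekap 0 (b - m) * ekap γ (b - a) = ENNReal.ofReal (1 / (-γ - 1)) * ekap (γ + 1) (m - a) := by
  rw [← lintegral_ekap_tail hγ (sub_pos.2 h),
    ← lintegral_sub_right_eq_self (fun z => ekap 0 (z - (m - a)) * ekap γ z) a]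
  congr! 4 with b
  ring

lemma lintegral_ekap_left {γ : ℝ} (hγ : γ < -1) {p x : ℝ} (h : p < x) :
    ∫⁻ a, ekap 0 (p - a) * ekap γ (x - a) = ENNReal.ofReal (1 / (-γ - 1)) * ekap (γ + 1) (x - p) := by
  rw [← lintegral_ekap_tail hγ (sub_pos.2 h),
    ← lintegral_sub_left_eq_self (fun z => ekap 0 (z - (x - p)) * ekap γ z) x]
  congr! 4 with b
  ring

/-- The mass of `z₊^γ` on `(0, 1)`. -/
noncomputable def mass (γ : ℝ) : ENNReal := ∫⁻ z in Ioo (0 : ℝ) 1, ekap γ z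

lemma mass_lt_top {γ : ℝ} (hγ : -1 < γ) : mass γ < ⊤ := by
  have h := (intervalIntegral.intervalIntegrable_rpow' (a := 0) (b := 1) hγ)
  rw [intervalIntegrable_iff_integrableOn_Ioo_of_le zero_le_one] at h
  have h2 := h.2
  unfold mass
  refine lt_of_eq_of_lt ?_ h2
  refine setLIntegral_congr_fun measurableSet_Ioo fun z hz => ?_
  simp only
  rw [ekap_of_pos _ hz.1, ← ofReal_norm, Real.norm_of_nonneg (Real.rpow_nonneg hz.1.le _)]

lemma lintegral_ekap_sub_left_le (γ : ℝ) {x : ℝ} (hx : x ≤ 1) :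
    ∫⁻ p in Ioo (0 : ℝ) 1, ekap γ (x - p) ≤ mass γ := by
  unfold mass
  rw [← lintegral_indicator measurableSet_Ioo, ← lintegral_indicator measurableSet_Ioo,
    ← lintegral_sub_left_eq_self (indicator (Ioo (0:ℝ) 1) (ekap γ)) x]
  refine lintegral_mono fun p => ?_
  by_cases hp : p ∈ Ioo (0:ℝ) 1
  · rw [indicator_of_mem hp]
    rcases lt_or_ge p x with h | h
    · rw [indicator_of_mem (by constructor <;> linarith [hp.1])]
    · rw [ekap_of_nonpos _ (by linarith)]; exact zero_le
  · rw [indicator_of_notMem hp]; exact zero_le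

lemma lintegral_ekap_sub_right_le (γ : ℝ) {p : ℝ} (hp : 0 ≤ p) :
    ∫⁻ x in Ioo (0 : ℝ) 1, ekap γ (x - p) ≤ mass γ := by
  unfold mass
  rw [← lintegral_indicator measurableSet_Ioo, ← lintegral_indicator measurableSet_Ioo,
    ← lintegral_sub_right_eq_self (indicator (Ioo (0:ℝ) 1) (ekap γ)) p]
  refine lintegral_mono fun x => ?_
  by_cases hx : x ∈ Ioo (0:ℝ) 1
  · rw [indicator_of_mem hx]
    rcases lt_or_ge p x with h | h
    · rw [indicator_of_mem (by constructor <;> linarith [hx.2])]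
    · rw [ekap_of_nonpos _ (by linarith)]; exact zero_le
  · rw [indicator_of_notMem hx]; exact zero_le

lemma two_mul_le_sq (a b : ENNReal) : 2 * (a * b) ≤ a ^ 2 + b ^ 2 := by
  rcases le_total a b with h | h
  · obtain ⟨c, rfl⟩ := exists_add_of_le h
    calc 2 * (a * (a + c)) ≤ 2 * (a * (a + c)) + c ^ 2 := le_self_add
      _ = _ := by ring
  · obtain ⟨c, rfl⟩ := exists_add_of_le h
    calc 2 * ((b + c) * b) ≤ 2 * ((b + c) * b) + c ^ 2 := le_self_add
      _ = _ := by ring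

/-- Cauchy–Schwarz with weight `k`. -/
lemma lintegral_mul_sq_le {μ : Measure ℝ} [SFinite μ] {k v : ℝ → ENNReal} (hk : Measurable k)
    (hv : Measurable v) :
    (∫⁻ x, k x * v x ∂μ) ^ 2 ≤ (∫⁻ x, k x ∂μ) * ∫⁻ x, k x * v x ^ 2 ∂μ := by
  have key : 2 * (∫⁻ x, k x * v x ∂μ) ^ 2 ≤ 2 * ((∫⁻ x, k x ∂μ) * ∫⁻ x, k x * v x ^ 2 ∂μ) := by
    calc 2 * (∫⁻ x, k x * v x ∂μ) ^ 2
        = ∫⁻ z, 2 * ((k z.1 * v z.1) * (k z.2 * v z.2)) ∂(μ.prod μ) := by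
          rw [lintegral_const_mul _ (by fun_prop), lintegral_prod_mul (f := fun x => k x * v x)
            (g := fun x => k x * v x) (by fun_prop) (by fun_prop), sq]
      _ ≤ ∫⁻ z, (k z.1 * v z.1 ^ 2) * k z.2 + k z.1 * (k z.2 * v z.2 ^ 2) ∂(μ.prod μ) := by
          refine lintegral_mono fun z => ?_
          calc 2 * ((k z.1 * v z.1) * (k z.2 * v z.2))
              = k z.1 * k z.2 * (2 * (v z.1 * v z.2)) := by ring
            _ ≤ k z.1 * k z.2 * (v z.1 ^ 2 + v z.2 ^ 2) := by gcongr; exact two_mul_le_sq _ _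
            _ = _ := by ring
      _ = 2 * ((∫⁻ x, k x ∂μ) * ∫⁻ x, k x * v x ^ 2 ∂μ) := by
          rw [lintegral_add_left (by fun_prop),
            lintegral_prod_mul (f := fun x => k x * v x ^ 2) (by fun_prop) (by fun_prop),
            lintegral_prod_mul (g := fun x => k x * v x ^ 2) (by fun_prop) (by fun_prop)]
          ring
  exact (ENNReal.mul_le_mul_iff_right (by norm_num) (by norm_num)).1 key

/-- The Beta integral `∫ (x-p)^(-α) (p-q)^(α-1) dp` over `q < p < x` does not depend on `q < x`. -/
lemma lintegral_beta {α : ℝ} (hα : α ∈ Ioo (0:ℝ) 1) (q x : ℝ) :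
    ∫⁻ p, ekap (-α) (x - p) * ekap (α - 1) (p - q)
      = ENNReal.ofReal (ProbabilityTheory.beta α (1 - α)) * ekap 0 (x - q) := by
  have hb := ProbabilityTheory.beta_pos hα.1 (sub_pos.2 hα.2)
  set B := ProbabilityTheory.beta α (1 - α)
  rcases lt_or_ge q x with h | h
  · have hd : 0 < x - q := sub_pos.2 h
    have h1 : ∫⁻ s, ENNReal.ofReal B * ProbabilityTheory.betaPDF α (1 - α) s = ENNReal.ofReal B := by
      rw [lintegral_const_mul (f := ProbabilityTheory.betaPDF α (1 - α)) _
          (ProbabilityTheory.measurable_betaPDFReal _ _).ennreal_ofReal,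
        ProbabilityTheory.lintegral_betaPDF_eq_one hα.1 (sub_pos.2 hα.2), mul_one]
    rw [ekap_zero_of_pos hd, mul_one, ← h1,
      ← lintegral_add_right_eq_self (fun p => ekap (-α) (x - p) * ekap (α - 1) (p - q)) q]
    have h2 : ∀ f : ℝ → ENNReal, Measurable f →
        ∫⁻ p, f p = ∫⁻ s, ENNReal.ofReal (x - q) * f ((x - q) * s) := by
      intro f hf
      conv_lhs => rw [← Real.smul_map_volume_mul_left hd.ne']
      rw [lintegral_smul_measure, lintegral_map hf (by fun_prop), lintegral_const_mul _ (by fun_prop),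
        abs_of_pos hd, smul_eq_mul]
    rw [h2 _ (by fun_prop)]
    refine lintegral_congr fun s => ?_
    have e1 : x - ((x - q) * s + q) = (x - q) * (1 - s) := by ring
    have e2 : (x - q) * s + q - q = (x - q) * s := by ring
    rw [e1, e2, ProbabilityTheory.betaPDF_eq]
    split_ifs with hs
    · rw [ekap_of_pos _ (mul_pos hd (by linarith)), ekap_of_pos _ (mul_pos hd hs.1),
        Real.mul_rpow hd.le (by linarith), Real.mul_rpow hd.le hs.1.le,
        ← ENNReal.ofReal_mul (by have : 0 < 1 - s := by linarith
                                 positivity), ← ENNReal.ofReal_mul hd.le, ← ENNReal.ofReal_mul hb.le]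
      congr 1
      have e3 : (x - q) * ((x - q) ^ (-α) * (x - q) ^ (α - 1)) = 1 := by
        rw [← Real.rpow_add hd, show -α + (α - 1) = -1 by ring, Real.rpow_neg_one,
          mul_inv_cancel₀ hd.ne']
      rw [show 1 - α - 1 = -α by ring]
      calc _ = ((x - q) * ((x - q) ^ (-α) * (x - q) ^ (α - 1))) * ((1 - s) ^ (-α) * s ^ (α - 1)) := by
            ring
        _ = B * (1 / B * s ^ (α - 1) * (1 - s) ^ (-α)) := by rw [e3]; field_simp
    · rw [ENNReal.ofReal_zero, mul_zero]
      rcases not_and_or.1 hs with hs | hs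
      · rw [ekap_of_nonpos (α - 1) (mul_nonpos_of_nonneg_of_nonpos hd.le (by linarith))]; simp
      · rw [ekap_of_nonpos (-α) (mul_nonpos_of_nonneg_of_nonpos hd.le (by linarith))]; simp
  · rw [ekap_of_nonpos 0 (by linarith), mul_zero]
    refine (lintegral_congr fun p => ?_).trans lintegral_zero
    rcases lt_or_ge p x with hp | hp
    · rw [ekap_of_nonpos (α - 1) (by linarith), mul_zero]
    · rw [ekap_of_nonpos (-α) (by linarith), zero_mul]

/-! ### The Gagliardo seminorm and the fractional Hardy inequality -/

/-- The Gagliardo seminorm of order `(1 + α) / 2`, squared, restricted to the pairs `y < x`. -/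
noncomputable def gag (α : ℝ) (V : ℝ → ℂ) : ENNReal :=
  ∫⁻ x in Ioo (0:ℝ) 1, ∫⁻ y in Ioo (0:ℝ) 1, ekap (-α - 2) (x - y) * ‖V x - V y‖ₑ ^ 2

lemma enorm_sub_sq_le (ε : ℝ) (hε : 0 < ε) (a b c : ℂ) :
    ‖a - c‖ₑ ^ 2 ≤ ENNReal.ofReal (1 + 1 / ε) * ‖a - b‖ₑ ^ 2
      + ENNReal.ofReal (1 + ε) * ‖b - c‖ₑ ^ 2 := by
  have h : ‖a - c‖ ^ 2 ≤ (1 + 1 / ε) * ‖a - b‖ ^ 2 + (1 + ε) * ‖b - c‖ ^ 2 := by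
    have h1 : ‖a - c‖ ≤ ‖a - b‖ + ‖b - c‖ := by
      simpa using norm_add_le (a - b) (b - c)
    have h2 : ‖a - c‖ ^ 2 ≤ (‖a - b‖ + ‖b - c‖) ^ 2 := by gcongr
    have h3 : 0 ≤ 1 / ε * (‖a - b‖ - ε * ‖b - c‖) ^ 2 := by positivity
    have h4 : 1 / ε * (‖a - b‖ - ε * ‖b - c‖) ^ 2
        = 1 / ε * ‖a - b‖ ^ 2 - 2 * (‖a - b‖ * ‖b - c‖) + ε * ‖b - c‖ ^ 2 := by
      field_simp
      ring
    nlinarith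
  have e : ∀ z : ℂ, ‖z‖ₑ ^ 2 = ENNReal.ofReal (‖z‖ ^ 2) := by
    intro z; rw [← ofReal_norm, ENNReal.ofReal_pow (norm_nonneg _)]
  rw [e, e, e, ← ENNReal.ofReal_mul (by positivity), ← ENNReal.ofReal_mul (by positivity),
    ← ENNReal.ofReal_add (by positivity) (by positivity)]
  exact ENNReal.ofReal_le_ofReal h

/-- The fractional Hardy inequality at `0`.  Averaging `V x - V 0 = (V x - V y) + (V y - V 0)` over
`y ∈ (0, x)` bounds the left side by a multiple of `gag α V` plus `(1 + α / 2) / (1 + α) < 1` times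
itself; it is finite because `V` is Hölder continuous of order `1 / 2` at `0`, so it can be
absorbed. -/
lemma hardy {α : ℝ} (hα : α ∈ Ioo (0:ℝ) 1) : ∃ C : ENNReal, C ≠ ⊤ ∧ ∀ V : ℝ → ℂ, Measurable V →
    (∃ K : ENNReal, K ≠ ⊤ ∧ ∀ x ∈ Ioo (0:ℝ) 1, ‖V x - V 0‖ₑ ^ 2 ≤ K * ekap 1 x) →
    ∫⁻ x in Ioo (0:ℝ) 1, ekap (-α - 1) x * ‖V x - V 0‖ₑ ^ 2 ≤ C * gag α V := by
  obtain ⟨h0, h1⟩ := hα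
  set A : ENNReal := ENNReal.ofReal (1 + 1 / (α / 2)) with hA
  set ρ : ENNReal := ENNReal.ofReal (1 + α / 2) * ENNReal.ofReal (1 / (1 + α)) with hρ
  have hρ1 : ρ < 1 := by
    rw [hρ, ← ENNReal.ofReal_mul (by positivity), ENNReal.ofReal_lt_one, mul_one_div,
      div_lt_one (by positivity)]
    linarith
  refine ⟨(1 - ρ)⁻¹ * A, ENNReal.mul_ne_top (ENNReal.inv_ne_top.2 (tsub_pos_of_lt hρ1).ne')
    (by simp [hA]), ?_⟩
  rintro V hV ⟨K, hK, hVK⟩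
  set H := ∫⁻ x in Ioo (0:ℝ) 1, ekap (-α - 1) x * ‖V x - V 0‖ₑ ^ 2 with hH
  have hfin : H ≠ ⊤ := by
    have : H ≤ K * mass (-α) := by
      rw [mass, ← lintegral_const_mul _ (by fun_prop)]
      refine setLIntegral_mono (by fun_prop) fun x hx => ?_
      calc ekap (-α - 1) x * ‖V x - V 0‖ₑ ^ 2 ≤ ekap (-α - 1) x * (K * ekap 1 x) := by
            gcongr; exact hVK x hx
        _ = K * (ekap (-α - 1) x * ekap 1 x) := by ring
        _ = K * ekap (-α) x := by rw [ekap_mul]; congr 2; ring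
    exact (this.trans_lt (ENNReal.mul_lt_top hK.lt_top (mass_lt_top (by linarith)))).ne
  have hmain : H ≤ A * gag α V + ρ * H := by
    calc H = ∫⁻ x in Ioo (0:ℝ) 1, ∫⁻ y in Ioo (0:ℝ) 1,
          ekap (-α - 2) x * ekap 0 (x - y) * ‖V x - V 0‖ₑ ^ 2 := by
          refine setLIntegral_congr_fun measurableSet_Ioo fun x hx => ?_
          have e1 : ∫⁻ y in Ioo (0:ℝ) 1, ekap 0 (x - y) = ENNReal.ofReal x := by
            rw [← lintegral_indicator measurableSet_Ioo]
            have : ∀ y, (Ioo (0:ℝ) 1).indicator (fun y => ekap 0 (x - y)) y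
                = (Ioo (0:ℝ) x).indicator 1 y := by
              intro y
              by_cases hy : y ∈ Ioo 0 x
              · rw [indicator_of_mem hy, indicator_of_mem (show y ∈ Ioo (0:ℝ) 1 from ⟨hy.1, hy.2.trans hx.2⟩),
                  ekap_zero_of_pos (by linarith [hy.2])]; rfl
              · rw [indicator_of_notMem hy]
                by_cases hy2 : y ∈ Ioo (0:ℝ) 1
                · rw [indicator_of_mem hy2, ekap_of_nonpos]
                  by_contra hc
                  exact hy ⟨hy2.1, by linarith⟩
                · rw [indicator_of_notMem hy2]
            simp_rw [this]
            rw [lintegral_indicator_one measurableSet_Ioo, Real.volume_Ioo, sub_zero]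
          rw [lintegral_mul_const _ (by fun_prop), lintegral_const_mul _ (by fun_prop), e1,
            ← ekap_one_eq hx.1.le, ekap_mul]
          congr 2; ring
      _ ≤ ∫⁻ x in Ioo (0:ℝ) 1, ∫⁻ y in Ioo (0:ℝ) 1,
          (A * (ekap (-α - 2) (x - y) * ‖V x - V y‖ₑ ^ 2) +
          ENNReal.ofReal (1 + α / 2) * (ekap 0 (x - y) * ekap (-α - 2) x * ‖V y - V 0‖ₑ ^ 2)) := by
          refine setLIntegral_mono' measurableSet_Ioo fun x hx => ?_
          refine setLIntegral_mono' measurableSet_Ioo fun y hy => ?_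
          rcases lt_or_ge y x with hyx | hyx
          · have hle : ekap (-α - 2) x ≤ ekap (-α - 2) (x - y) := by
              rw [ekap_of_pos _ hx.1, ekap_of_pos _ (by linarith)]
              refine ENNReal.ofReal_le_ofReal ?_
              exact Real.rpow_le_rpow_of_nonpos (by linarith) (by linarith [hy.1]) (by linarith)
            rw [ekap_zero_of_pos (by linarith), mul_one, one_mul]
            calc _ ≤ ekap (-α - 2) x * (A * ‖V x - V y‖ₑ ^ 2
                  + ENNReal.ofReal (1 + α / 2) * ‖V y - V 0‖ₑ ^ 2) := by
                  gcongr
                  exact enorm_sub_sq_le (α / 2) (by positivity) _ _ _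
              _ = A * (ekap (-α - 2) x * ‖V x - V y‖ₑ ^ 2)
                  + ENNReal.ofReal (1 + α / 2) * (ekap (-α - 2) x * ‖V y - V 0‖ₑ ^ 2) := by ring
              _ ≤ _ := by gcongr
          · rw [ekap_of_nonpos 0 (by linarith)]; simp
      _ = A * gag α V + ENNReal.ofReal (1 + α / 2) * ∫⁻ x in Ioo (0:ℝ) 1, ∫⁻ y in Ioo (0:ℝ) 1,
          (ekap 0 (x - y) * ekap (-α - 2) x * ‖V y - V 0‖ₑ ^ 2) := by
          have m1 : Measurable fun z : ℝ × ℝ => ekap (-α - 2) (z.1 - z.2) * ‖V z.1 - V z.2‖ₑ ^ 2 := by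
            fun_prop
          have m2 : Measurable fun z : ℝ × ℝ =>
              ekap 0 (z.1 - z.2) * ekap (-α - 2) z.1 * ‖V z.2 - V 0‖ₑ ^ 2 := by
            fun_prop
          rw [gag, ← lintegral_const_mul _ m1.lintegral_prod_right',
            ← lintegral_const_mul _ m2.lintegral_prod_right',
            ← lintegral_add_left (m1.lintegral_prod_right'.const_mul _)]
          refine lintegral_congr fun x => ?_
          rw [lintegral_add_left (by fun_prop), lintegral_const_mul _ (by fun_prop),
            lintegral_const_mul _ (by fun_prop)]
      _ ≤ A * gag α V + ρ * H := by
          rw [hρ, mul_assoc]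
          gcongr
          rw [lintegral_lintegral_swap (by fun_prop), hH, ← lintegral_const_mul _ (by fun_prop)]
          refine setLIntegral_mono' measurableSet_Ioo fun y hy => ?_
          rw [lintegral_mul_const _ (by fun_prop), ← mul_assoc]
          gcongr
          calc ∫⁻ x in Ioo (0:ℝ) 1, ekap 0 (x - y) * ekap (-α - 2) x
              ≤ ∫⁻ x, ekap 0 (x - y) * ekap (-α - 2) x := setLIntegral_le_lintegral _ _
            _ = _ := by
              rw [lintegral_ekap_tail (by linarith) hy.1, show -(-α - 2) - 1 = 1 + α by ring,
                show -α - 2 + 1 = -α - 1 by ring]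
  have h3 : (1 - ρ) * H ≤ A * gag α V := by
    rw [ENNReal.sub_mul (fun _ _ => hfin), one_mul]
    exact tsub_le_iff_right.2 hmain
  rw [mul_assoc]
  have h4 : (1 - ρ) ≠ 0 := (tsub_pos_of_lt hρ1).ne'
  calc H = (1 - ρ)⁻¹ * ((1 - ρ) * H) := by
        rw [← mul_assoc, ENNReal.inv_mul_cancel h4 (by simp), one_mul]
    _ ≤ _ := by gcongr

/-- One-sided estimate for a function which is constant on `(-∞, 0]`. -/
lemma left_bound {α : ℝ} (hα : α ∈ Ioo (0:ℝ) 1) : ∃ C : ENNReal, C ≠ ⊤ ∧ ∀ V : ℝ → ℂ, Measurable V →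
    (∃ K : ENNReal, K ≠ ⊤ ∧ ∀ x ∈ Ioo (0:ℝ) 1, ‖V x - V 0‖ₑ ^ 2 ≤ K * ekap 1 x) →
    (∀ a ≤ 0, V a = V 0) →
    ∫⁻ m in Ioo (0:ℝ) 1, ∫⁻ a, ekap (-α - 2) (m - a) * ‖V m - V a‖ₑ ^ 2 ≤ C * gag α V := by
  obtain ⟨C, hC, hh⟩ := hardy hα
  obtain ⟨h0, h1⟩ := hα
  refine ⟨1 + ENNReal.ofReal (1 / (1 + α)) * C, by finiteness, ?_⟩
  intro V hV hK hV0
  have m1 : Measurable fun z : ℝ × ℝ => ekap (-α - 2) (z.1 - z.2) * ‖V z.1 - V z.2‖ₑ ^ 2 := by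
    fun_prop
  calc ∫⁻ m in Ioo (0:ℝ) 1, ∫⁻ a, ekap (-α - 2) (m - a) * ‖V m - V a‖ₑ ^ 2
      ≤ ∫⁻ m in Ioo (0:ℝ) 1, ((∫⁻ a in Ioo (0:ℝ) 1, ekap (-α - 2) (m - a) * ‖V m - V a‖ₑ ^ 2)
        + ENNReal.ofReal (1 / (1 + α)) * (ekap (-α - 1) m * ‖V m - V 0‖ₑ ^ 2)) := by
        refine setLIntegral_mono' measurableSet_Ioo fun m hm => ?_
        have e : ENNReal.ofReal (1 / (1 + α)) * (ekap (-α - 1) m * ‖V m - V 0‖ₑ ^ 2)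
            = ∫⁻ a, ekap 0 (0 - a) * ekap (-α - 2) (m - a) * ‖V m - V 0‖ₑ ^ 2 := by
          rw [lintegral_mul_const _ (by fun_prop), lintegral_ekap_left (by linarith) hm.1, mul_assoc,
            show -(-α - 2) - 1 = 1 + α by ring, show -α - 2 + 1 = -α - 1 by ring, sub_zero]
        rw [e, ← lintegral_indicator measurableSet_Ioo, ← lintegral_add_right _ (by fun_prop)]
        -- the two integrands cover all `a` except `a = 0`
        refine lintegral_mono_ae ?_
        have hne : ∀ᵐ a : ℝ, a ≠ 0 := by simp [ae_iff]
        filter_upwards [hne] with a ha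
        rcases lt_or_gt_of_ne ha with ha | ha
        · rw [ekap_zero_of_pos (by linarith), hV0 a ha.le, one_mul]
          exact le_add_self
        · rcases lt_or_ge a 1 with ha1 | ha1
          · rw [indicator_of_mem (show a ∈ Ioo (0:ℝ) 1 from ⟨ha, ha1⟩)]
            exact le_self_add
          · rw [ekap_of_nonpos _ (by linarith [hm.2])]; simp
    _ = gag α V + ENNReal.ofReal (1 / (1 + α)) *
        ∫⁻ m in Ioo (0:ℝ) 1, ekap (-α - 1) m * ‖V m - V 0‖ₑ ^ 2 := by
        rw [lintegral_add_right _ (by fun_prop), lintegral_const_mul _ (by fun_prop), gag]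
    _ ≤ gag α V + ENNReal.ofReal (1 / (1 + α)) * (C * gag α V) := by
        gcongr; exact hh V hV hK
    _ = _ := by ring

lemma gag_reflect (α : ℝ) {V : ℝ → ℂ} (hV : Measurable V) :
    gag α (fun x => V (1 - x)) = gag α V := by
  have m1 : Measurable fun z : ℝ × ℝ => ekap (-α - 2) (z.1 - z.2) * ‖V z.1 - V z.2‖ₑ ^ 2 := by
    fun_prop
  have hmem : ∀ x : ℝ, 1 - x ∈ Ioo (0:ℝ) 1 ↔ x ∈ Ioo (0:ℝ) 1 := by
    intro x; constructor <;> rintro ⟨h, h'⟩ <;> constructor <;> linarith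
  have key : ∀ f : ℝ → ENNReal,
      ∫⁻ x in Ioo (0:ℝ) 1, f (1 - x) = ∫⁻ x in Ioo (0:ℝ) 1, f x := by
    intro f
    rw [← lintegral_indicator measurableSet_Ioo, ← lintegral_indicator measurableSet_Ioo,
      ← lintegral_sub_left_eq_self _ (1:ℝ)]
    refine lintegral_congr fun x => ?_
    by_cases hx : x ∈ Ioo (0:ℝ) 1
    · rw [indicator_of_mem hx, indicator_of_mem ((hmem x).2 hx), sub_sub_cancel]
    · rw [indicator_of_notMem hx, indicator_of_notMem (fun h => hx ((hmem x).1 h))]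
  have k2 := key fun x => ∫⁻ y in Ioo (0:ℝ) 1, ekap (-α - 2) (y - x) * ‖V y - V x‖ₑ ^ 2
  unfold gag
  rw [lintegral_lintegral_swap (f := fun x y => ekap (-α - 2) (x - y) * ‖V x - V y‖ₑ ^ 2)
    (by fun_prop), ← k2]
  refine lintegral_congr fun x => ?_
  rw [← key]
  refine lintegral_congr fun y => ?_
  have e : x - (1 - y) = y - (1 - x) := by ring
  have e2 : ‖V (1 - x) - V (1 - (1 - y))‖ₑ = ‖V y - V (1 - x)‖ₑ := by
    rw [← enorm_neg, sub_sub_cancel]; congr 1; ring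
  rw [e, ← e2]

lemma right_bound {α : ℝ} (hα : α ∈ Ioo (0:ℝ) 1) : ∃ C : ENNReal, C ≠ ⊤ ∧ ∀ V : ℝ → ℂ, Measurable V →
    (∃ K : ENNReal, K ≠ ⊤ ∧ ∀ x ∈ Ioo (0:ℝ) 1, ‖V x - V 1‖ₑ ^ 2 ≤ K * ekap 1 (1 - x)) →
    (∀ b ≥ 1, V b = V 1) →
    ∫⁻ m in Ioo (0:ℝ) 1, ∫⁻ b, ekap (-α - 2) (b - m) * ‖V b - V m‖ₑ ^ 2 ≤ C * gag α V := by
  obtain ⟨C, hC, h⟩ := left_bound hα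
  refine ⟨C, hC, ?_⟩
  rintro V hV ⟨K, hK, hVK⟩ hV1
  have hmem : ∀ x : ℝ, 1 - x ∈ Ioo (0:ℝ) 1 ↔ x ∈ Ioo (0:ℝ) 1 := by
    intro x; constructor <;> rintro ⟨h, h'⟩ <;> constructor <;> linarith
  have h2 := h (fun x => V (1 - x)) (by fun_prop) ⟨K, hK, fun x hx => ?_⟩ ?_
  · rw [gag_reflect α hV] at h2
    refine le_of_eq_of_le ?_ h2
    rw [← lintegral_indicator measurableSet_Ioo, ← lintegral_indicator measurableSet_Ioo,
      ← lintegral_sub_left_eq_self _ (1:ℝ)]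
    refine lintegral_congr fun m => ?_
    by_cases hx : m ∈ Ioo (0:ℝ) 1
    · rw [indicator_of_mem hx, indicator_of_mem ((hmem m).2 hx),
        ← lintegral_sub_left_eq_self _ (1:ℝ)]
      refine lintegral_congr fun a => ?_
      have e : m - a = 1 - a - (1 - m) := by ring
      have e2 : ‖V (1 - m) - V (1 - a)‖ₑ = ‖V (1 - a) - V (1 - m)‖ₑ := by
        rw [← enorm_neg]; congr 1; ring
      rw [e, e2]
    · rw [indicator_of_notMem hx, indicator_of_notMem (fun h => hx ((hmem m).1 h))]
  · have := hVK (1 - x) ((hmem x).2 hx)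
    simpa using this
  · intro a ha
    simp only [sub_zero]
    exact hV1 _ (by linarith)

/-! ### Primitives of square integrable functions -/

/-- `U` is a primitive of the function `G`, which is square integrable and vanishes outside
`(0, 1]`; so `U` is constant on `(-∞, 0]` and on `[1, ∞)`. -/
structure IsPrim (G U : ℝ → ℂ) : Prop where
  measG : Measurable G
  measU : Measurable U
  supp : ∀ t, t ∉ Ioc (0:ℝ) 1 → G t = 0
  int : Integrable G
  sq : ∫⁻ t, ‖G t‖ₑ ^ 2 ≠ ⊤
  prim : ∀ a b, a ≤ b → U b - U a = ∫ t in a..b, G t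

namespace IsPrim

variable {G U : ℝ → ℂ}

lemma const_left (h : IsPrim G U) {a m : ℝ} (ham : a ≤ m) (hm : m ≤ 0) : U m - U a = 0 := by
  rw [h.prim a m ham, intervalIntegral.integral_of_le ham]
  refine setIntegral_eq_zero_of_forall_eq_zero fun t ht => h.supp t fun h' => ?_
  linarith [h'.1, ht.2]

lemma const_right (h : IsPrim G U) {m b : ℝ} (hmb : m ≤ b) (hm : 1 ≤ m) : U b - U m = 0 := by
  rw [h.prim m b hmb, intervalIntegral.integral_of_le hmb]
  refine setIntegral_eq_zero_of_forall_eq_zero fun t ht => h.supp t fun h' => ?_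
  linarith [h'.2, ht.1]

lemma hoelder (h : IsPrim G U) {a b : ℝ} (hab : a ≤ b) :
    ‖U b - U a‖ₑ ^ 2 ≤ ekap 1 (b - a) * ∫⁻ t, ekap 0 (t - a) * ekap 0 (b - t) * ‖G t‖ₑ ^ 2 := by
  have hm := h.measG
  have e : ∀ t, ekap 0 (t - a) * ekap 0 (b - t) * ‖G t‖ₑ ^ 2
      = (Ioo a b).indicator (fun t => ‖G t‖ₑ ^ 2) t := by
    intro t
    by_cases ht : t ∈ Ioo a b
    · rw [indicator_of_mem ht, ekap_zero_of_pos (by linarith [ht.1]),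
        ekap_zero_of_pos (by linarith [ht.2]), one_mul, one_mul]
    · rw [indicator_of_notMem ht]
      by_cases h1 : a < t
      · rw [ekap_of_nonpos 0 (z := b - t)]
        · simp
        · by_contra h2
          exact ht ⟨h1, by linarith⟩
      · rw [ekap_of_nonpos 0 (z := t - a) (by linarith)]; simp
  simp_rw [e]
  rw [lintegral_indicator measurableSet_Ioo, ekap_one_eq (by linarith), h.prim a b hab,
    intervalIntegral.integral_of_le hab, ← Measure.restrict_congr_set Ioo_ae_eq_Ioc]
  have := lintegral_mul_sq_le (μ := volume.restrict (Ioo a b)) (k := fun _ => 1)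
    (v := fun t => ‖G t‖ₑ) measurable_const (by fun_prop)
  simp only [one_mul, lintegral_const, Measure.restrict_apply_univ, Real.volume_Ioo] at this
  refine le_trans ?_ this
  gcongr
  exact enorm_integral_le_lintegral_enorm _

lemma hoelder' (h : IsPrim G U) {a b : ℝ} (hab : a ≤ b) :
    ‖U b - U a‖ₑ ^ 2 ≤ (∫⁻ t, ‖G t‖ₑ ^ 2) * ekap 1 (b - a) := by
  refine (h.hoelder hab).trans ?_
  rw [mul_comm]
  gcongr with t
  have e : ∀ z, ekap 0 z ≤ 1 := by
    intro z
    rcases lt_or_ge 0 z with hz | hz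
    · rw [ekap_zero_of_pos hz]
    · rw [ekap_of_nonpos _ hz]; exact zero_le
  calc _ ≤ 1 * 1 * ‖G t‖ₑ ^ 2 := by gcongr <;> exact e _
    _ = _ := by ring

/-- `H¹(0,1)` embeds into the Sobolev space of order `(1 + α) / 2 < 1`. -/
lemma gag_lt_top (h : IsPrim G U) {α : ℝ} (hα : α ∈ Ioo (0:ℝ) 1) : gag α U < ⊤ := by
  have hm := h.measG
  have hmU := h.measU
  obtain ⟨h0, h1⟩ := hα
  calc gag α U ≤ ∫⁻ x in Ioo (0:ℝ) 1, ∫⁻ y in Ioo (0:ℝ) 1, ∫⁻ t,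
        ekap (-α - 1) (x - y) * (ekap 0 (t - y) * ekap 0 (x - t) * ‖G t‖ₑ ^ 2) := by
        unfold gag
        gcongr with x y
        rw [lintegral_const_mul _ (by fun_prop)]
        rcases lt_or_ge y x with hxy | hxy
        · calc _ ≤ ekap (-α - 2) (x - y) *
                (ekap 1 (x - y) * ∫⁻ t, ekap 0 (t - y) * ekap 0 (x - t) * ‖G t‖ₑ ^ 2) := by
                gcongr
                exact h.hoelder hxy.le
            _ = _ := by
                rw [← mul_assoc, ekap_mul, show -α - 2 + 1 = -α - 1 by ring]
        · rw [ekap_of_nonpos _ (by linarith), zero_mul]; exact zero_le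
    _ = ∫⁻ t, ∫⁻ y in Ioo (0:ℝ) 1, ∫⁻ x in Ioo (0:ℝ) 1,
        ekap (-α - 1) (x - y) * (ekap 0 (t - y) * ekap 0 (x - t) * ‖G t‖ₑ ^ 2) := by
        have m3 : Measurable fun z : (ℝ × ℝ) × ℝ => ekap (-α - 1) (z.1.1 - z.1.2) *
            (ekap 0 (z.2 - z.1.2) * ekap 0 (z.1.1 - z.2) * ‖G z.2‖ₑ ^ 2) := by fun_prop
        have m4 : Measurable fun z : (ℝ × ℝ) × ℝ => ekap (-α - 1) (z.2 - z.1.1) *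
            (ekap 0 (z.1.2 - z.1.1) * ekap 0 (z.2 - z.1.2) * ‖G z.1.2‖ₑ ^ 2) := by fun_prop
        rw [lintegral_lintegral_swap (by exact m3.lintegral_prod_right'.aemeasurable),
          lintegral_lintegral_swap (μ := volume) (by
            have := (m4.lintegral_prod_right' (ν := volume.restrict (Ioo (0:ℝ) 1))).comp
              measurable_swap
            exact this.aemeasurable)]
        refine lintegral_congr fun y => ?_
        rw [lintegral_lintegral_swap (by fun_prop)]
    _ ≤ ∫⁻ t, ENNReal.ofReal (1 / α) * mass (-α) * ‖G t‖ₑ ^ 2 := by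
        refine lintegral_mono fun t => ?_
        by_cases ht : t ∈ Ioc (0:ℝ) 1
        · calc _ ≤ ∫⁻ y in Ioo (0:ℝ) 1,
              ENNReal.ofReal (1 / α) * ekap (-α) (t - y) * ‖G t‖ₑ ^ 2 := by
                refine lintegral_mono fun y => ?_
                refine (setLIntegral_le_lintegral _ _).trans ?_
                rcases lt_or_ge y t with hy | hy
                · have e : ∀ x, ekap (-α - 1) (x - y) *
                      (ekap 0 (t - y) * ekap 0 (x - t) * ‖G t‖ₑ ^ 2)
                      = (ekap 0 (x - t) * ekap (-α - 1) (x - y)) * ‖G t‖ₑ ^ 2 := by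
                    intro x; rw [ekap_zero_of_pos (by linarith : 0 < t - y)]; ring
                  simp_rw [e]
                  rw [lintegral_mul_const _ (by fun_prop), lintegral_ekap_right (by linarith) hy,
                    show -(-α - 1) - 1 = α by ring, show -α - 1 + 1 = -α by ring]
                · rw [ekap_of_nonpos 0 (by linarith : t - y ≤ 0)]; simp
            _ ≤ _ := by
                rw [lintegral_mul_const _ (by fun_prop), lintegral_const_mul _ (by fun_prop)]
                gcongr
                exact lintegral_ekap_sub_left_le _ ht.2
        · simp [h.supp t ht]
    _ < ⊤ := by
        rw [lintegral_const_mul _ (by fun_prop)]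
        exact ENNReal.mul_lt_top (ENNReal.mul_lt_top ENNReal.ofReal_lt_top
          (mass_lt_top (by linarith))) h.sq.lt_top

/-- The integral of `G` over `(a, b)` for `a < b`, written with indicator functions. -/
lemma integral_window (h : IsPrim G U) (a b : ℝ) :
    ∫ t, ((kap 0 (t - a) * kap 0 (b - t) : ℝ) : ℂ) * G t = (kap 0 (b - a) : ℂ) * (U b - U a) := by
  have e : ∀ t, ((kap 0 (t - a) * kap 0 (b - t) : ℝ) : ℂ) * G t = (Ioo a b).indicator G t := by
    intro t
    by_cases ht : t ∈ Ioo a b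
    · rw [indicator_of_mem ht, kap_of_pos _ (by linarith [ht.1]), kap_of_pos _ (by linarith [ht.2])]
      simp
    · rw [indicator_of_notMem ht]
      by_cases h1 : a < t
      · rw [kap_of_nonpos 0 (z := b - t)]
        · simp
        · by_contra h2
          exact ht ⟨h1, by linarith⟩
      · rw [kap_of_nonpos 0 (z := t - a) (by linarith)]; simp
  simp_rw [e]
  rw [integral_indicator measurableSet_Ioo]
  rcases lt_or_ge a b with hab | hab
  · rw [kap_of_pos _ (by linarith), h.prim a b hab.le, intervalIntegral.integral_of_le hab.le,
      Measure.restrict_congr_set Ioo_ae_eq_Ioc]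
    simp
  · rw [kap_of_nonpos _ (by linarith), Ioo_eq_empty (by linarith)]
    simp

/-- The central estimate: `|U m - U a| |U b - U m|` integrated over
`a < m < b` against `(b - a)^(-α-3)`. -/
lemma triple_bound {α : ℝ} (hα : α ∈ Ioo (0:ℝ) 1) : ∃ C : ENNReal, C ≠ ⊤ ∧ ∀ G U : ℝ → ℂ,
    IsPrim G U →
    ∫⁻ m, ∫⁻ a, ∫⁻ b, ekap (-α - 3) (b - a) * ((ekap 0 (m - a) * ‖U m - U a‖ₑ) *
      (ekap 0 (b - m) * ‖U b - U m‖ₑ)) ≤ C * gag α U := by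
  obtain ⟨C1, hC1, hl⟩ := left_bound hα
  obtain ⟨C2, hC2, hr⟩ := right_bound hα
  obtain ⟨h0, h1⟩ := hα
  set c := ENNReal.ofReal (1 / (α + 2)) with hc
  refine ⟨c * (C1 + C2), by finiteness, fun G U h => ?_⟩
  have hm := h.measU
  have hleft := hl U hm ⟨_, h.sq, fun x hx => by simpa using h.hoelder' hx.1.le⟩
    (fun a ha => by rw [eq_comm, ← sub_eq_zero]; exact h.const_left ha le_rfl)
  have hright := hr U hm ⟨_, h.sq, fun x hx => by
      rw [← enorm_neg, neg_sub]; exact h.hoelder' hx.2.le⟩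
    (fun a ha => by rw [← sub_eq_zero]; exact h.const_right ha le_rfl)
  have m2 : Measurable fun z : ℝ × ℝ => ekap (-α - 2) (z.1 - z.2) * ‖U z.1 - U z.2‖ₑ ^ 2 := by
    fun_prop
  calc ∫⁻ m, ∫⁻ a, ∫⁻ b, ekap (-α - 3) (b - a) * ((ekap 0 (m - a) * ‖U m - U a‖ₑ) *
      (ekap 0 (b - m) * ‖U b - U m‖ₑ))
      ≤ ∫⁻ m in Ioo (0:ℝ) 1, ((∫⁻ a, c * (ekap (-α - 2) (m - a) * ‖U m - U a‖ₑ ^ 2))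
        + ∫⁻ b, c * (ekap (-α - 2) (b - m) * ‖U b - U m‖ₑ ^ 2)) := by
        rw [← lintegral_indicator measurableSet_Ioo]
        refine lintegral_mono fun m => ?_
        by_cases hmI : m ∈ Ioo (0:ℝ) 1
        · rw [indicator_of_mem hmI]
          calc _ ≤ ∫⁻ a, ∫⁻ b,
              ((ekap 0 (b - m) * ekap (-α - 3) (b - a)) * (ekap 0 (m - a) * ‖U m - U a‖ₑ ^ 2)
              + (ekap 0 (m - a) * ekap (-α - 3) (b - a)) *
                (ekap 0 (b - m) * ‖U b - U m‖ₑ ^ 2)) := by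
                gcongr with a b
                have e2 := two_mul_le_sq ‖U m - U a‖ₑ ‖U b - U m‖ₑ
                have e3 : ‖U m - U a‖ₑ * ‖U b - U m‖ₑ ≤ ‖U m - U a‖ₑ ^ 2 + ‖U b - U m‖ₑ ^ 2 :=
                  le_trans (by rw [two_mul]; exact le_self_add) e2
                calc _ = (ekap 0 (b - m) * ekap (-α - 3) (b - a) * ekap 0 (m - a)) *
                      (‖U m - U a‖ₑ * ‖U b - U m‖ₑ) := by ring
                  _ ≤ (ekap 0 (b - m) * ekap (-α - 3) (b - a) * ekap 0 (m - a)) *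
                      (‖U m - U a‖ₑ ^ 2 + ‖U b - U m‖ₑ ^ 2) := by gcongr
                  _ = _ := by ring
            _ = (∫⁻ a, ∫⁻ b,
                (ekap 0 (b - m) * ekap (-α - 3) (b - a)) * (ekap 0 (m - a) * ‖U m - U a‖ₑ ^ 2))
              + ∫⁻ b, ∫⁻ a, (ekap 0 (m - a) * ekap (-α - 3) (b - a)) *
                (ekap 0 (b - m) * ‖U b - U m‖ₑ ^ 2) := by
                rw [lintegral_lintegral_swap (f := fun b a =>
                  (ekap 0 (m - a) * ekap (-α - 3) (b - a)) *
                    (ekap 0 (b - m) * ‖U b - U m‖ₑ ^ 2)) (by fun_prop)]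
                have m5 : Measurable fun z : ℝ × ℝ => (ekap 0 (z.2 - m) *
                  ekap (-α - 3) (z.2 - z.1)) * (ekap 0 (m - z.1) * ‖U m - U z.1‖ₑ ^ 2) := by
                  fun_prop
                rw [← lintegral_add_left m5.lintegral_prod_right']
                refine lintegral_congr fun a => ?_
                rw [lintegral_add_left (by fun_prop)]
            _ ≤ _ := by
                refine add_le_add (lintegral_mono fun a => ?_) (lintegral_mono fun b => ?_)
                · rw [lintegral_mul_const _ (by fun_prop)]
                  rcases lt_or_ge a m with ham | ham
                  · rw [lintegral_ekap_right (by linarith) ham, ekap_zero_of_pos (by linarith),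
                      show -(-α - 3) - 1 = α + 2 by ring, show -α - 3 + 1 = -α - 2 by ring, one_mul,
                      mul_assoc]
                  · rw [ekap_of_nonpos 0 (by linarith : m - a ≤ 0)]; simp
                · rw [lintegral_mul_const _ (by fun_prop)]
                  rcases lt_or_ge m b with ham | ham
                  · rw [lintegral_ekap_left (by linarith) ham, ekap_zero_of_pos (by linarith),
                      show -(-α - 3) - 1 = α + 2 by ring, show -α - 3 + 1 = -α - 2 by ring, one_mul,
                      mul_assoc]
                  · rw [ekap_of_nonpos 0 (by linarith : b - m ≤ 0)]; simp
        -- for `m` outside `(0, 1)` one of the two increments vanishes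
        · rw [indicator_of_notMem hmI, nonpos_iff_eq_zero]
          refine (lintegral_congr fun a => ?_).trans lintegral_zero
          refine (lintegral_congr fun b => ?_).trans lintegral_zero
          rcases lt_or_ge a m with ham | ham
          · rcases lt_or_ge m b with hmb | hmb
            · rcases le_or_gt m 0 with hm0 | hm0
              · rw [h.const_left ham.le hm0]; simp
              · have : 1 ≤ m := by
                  by_contra hlt
                  exact hmI ⟨hm0, by linarith⟩
                rw [h.const_right hmb.le this]; simp
            · rw [ekap_of_nonpos 0 (by linarith : b - m ≤ 0)]; simp
          · rw [ekap_of_nonpos 0 (by linarith : m - a ≤ 0)]; simp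
    _ = c * (∫⁻ m in Ioo (0:ℝ) 1, ∫⁻ a, ekap (-α - 2) (m - a) * ‖U m - U a‖ₑ ^ 2)
        + c * ∫⁻ m in Ioo (0:ℝ) 1, ∫⁻ b, ekap (-α - 2) (b - m) * ‖U b - U m‖ₑ ^ 2 := by
        have m6 : Measurable fun m => ∫⁻ b, ekap (-α - 2) (b - m) * ‖U b - U m‖ₑ ^ 2 :=
          m2.lintegral_prod_left'
        rw [← lintegral_const_mul _ m2.lintegral_prod_right', ← lintegral_const_mul _ m6,
          ← lintegral_add_left (m2.lintegral_prod_right'.const_mul _)]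
        refine lintegral_congr fun m => ?_
        rw [lintegral_const_mul _ (by fun_prop), lintegral_const_mul _ (by fun_prop)]
    _ ≤ c * (C1 * gag α U) + c * (C2 * gag α U) := by gcongr
    _ = _ := by ring

end IsPrim

/-! ### The quadratic form of fractional integration -/

lemma lintegral_eq_of_supp {f : ℝ → ENNReal} (hf : ∀ t, t ∉ Ioc (0:ℝ) 1 → f t = 0) :
    ∫⁻ t, f t = ∫⁻ t in Ioo (0:ℝ) 1, f t := by
  rw [Measure.restrict_congr_set Ioo_ae_eq_Ioc, ← lintegral_indicator measurableSet_Ioc]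
  refine lintegral_congr fun t => ?_
  by_cases ht : t ∈ Ioc (0:ℝ) 1
  · rw [indicator_of_mem ht]
  · rw [indicator_of_notMem ht, hf t ht]

lemma lintegral_window {p x : ℝ} (h : p < x) :
    ∫⁻ m, ekap 0 (m - p) * ekap 0 (x - m) = ekap 1 (x - p) := by
  have e : ∀ t, ekap 0 (t - p) * ekap 0 (x - t) = (Ioo p x).indicator 1 t := by
    intro t
    by_cases ht : t ∈ Ioo p x
    · rw [indicator_of_mem ht, ekap_zero_of_pos (by linarith [ht.1]),
        ekap_zero_of_pos (by linarith [ht.2]), one_mul]; rfl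
    · rw [indicator_of_notMem ht]
      by_cases h1 : p < t
      · rw [ekap_of_nonpos 0 (z := x - t)]
        · simp
        · by_contra h2
          exact ht ⟨h1, by linarith⟩
      · rw [ekap_of_nonpos 0 (z := t - p) (by linarith)]; simp
  simp_rw [e]
  rw [lintegral_indicator_one measurableSet_Ioo, Real.volume_Ioo, ekap_one_eq (by linarith)]

/-- The kernel `(b - a)^(-α-3)` on the configurations `a < p < m < x < b`, for `y = (m, a, b)`. -/
noncomputable def conf (α p x : ℝ) (y : ℝ × ℝ × ℝ) : ℝ :=
  (kap 0 (p - y.2.1) * kap 0 (y.1 - p)) * (kap 0 (x - y.1) * kap 0 (y.2.2 - x)) *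
    kap (-α - 3) (y.2.2 - y.2.1)

lemma conf_nonneg (α p x : ℝ) (y : ℝ × ℝ × ℝ) : 0 ≤ conf α p x y := by
  have := kap_nonneg
  unfold conf
  have h1 := this 0 (p - y.2.1)
  have h2 := this 0 (y.1 - p)
  have h3 := this 0 (x - y.1)
  have h4 := this 0 (y.2.2 - x)
  have h5 := this (-α - 3) (y.2.2 - y.2.1)
  positivity

lemma ofReal_conf (α p x : ℝ) (y : ℝ × ℝ × ℝ) : ENNReal.ofReal (conf α p x y) =
    (ekap 0 (p - y.2.1) * ekap 0 (y.1 - p)) * (ekap 0 (x - y.1) * ekap 0 (y.2.2 - x)) *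
    ekap (-α - 3) (y.2.2 - y.2.1) := by
  have h := kap_nonneg
  unfold conf ekap
  rw [ENNReal.ofReal_mul (mul_nonneg (mul_nonneg (h _ _) (h _ _)) (mul_nonneg (h _ _) (h _ _))),
    ENNReal.ofReal_mul (mul_nonneg (h _ _) (h _ _)), ENNReal.ofReal_mul (h _ _),
    ENNReal.ofReal_mul (h _ _)]

/-- Superposition formula: integrating out `m`, `a`, `b` turns `conf` into a multiple of
`(x - p)₊^(-α)`. -/
lemma lintegral_conf {α : ℝ} (hα : α ∈ Ioo (0:ℝ) 1) (p x : ℝ) :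
    ∫⁻ y, ENNReal.ofReal (conf α p x y)
      = ENNReal.ofReal (1 / (α + 2) * (1 / (α + 1))) * ekap (-α) (x - p) := by
  obtain ⟨h0, h1⟩ := hα
  simp_rw [ofReal_conf]
  rcases lt_or_ge p x with hpx | hpx
  · have hb : ∀ m a, ∫⁻ b, (ekap 0 (p - a) * ekap 0 (m - p)) * (ekap 0 (x - m) * ekap 0 (b - x)) *
        ekap (-α - 3) (b - a) = (ekap 0 (m - p) * ekap 0 (x - m)) *
          (ENNReal.ofReal (1 / (α + 2)) * (ekap 0 (p - a) * ekap (-α - 2) (x - a))) := by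
      intro m a
      rcases lt_or_ge a p with ha | ha
      · have e : ∀ b, (ekap 0 (p - a) * ekap 0 (m - p)) * (ekap 0 (x - m) * ekap 0 (b - x)) *
            ekap (-α - 3) (b - a) = (ekap 0 (p - a) * (ekap 0 (m - p) * ekap 0 (x - m))) *
              (ekap 0 (b - x) * ekap (-α - 3) (b - a)) := by intro b; ring
        simp_rw [e]
        rw [lintegral_const_mul _ (by fun_prop), lintegral_ekap_right (by linarith) (by linarith),
          show -(-α - 3) - 1 = α + 2 by ring, show -α - 3 + 1 = -α - 2 by ring]
        ring
      · rw [ekap_of_nonpos 0 (by linarith : p - a ≤ 0)]; simp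
    rw [Measure.volume_eq_prod, lintegral_prod _ (by fun_prop)]
    calc _ = ∫⁻ m, (ekap 0 (m - p) * ekap 0 (x - m)) *
          (ENNReal.ofReal (1 / (α + 2)) * (ENNReal.ofReal (1 / (α + 1)) * ekap (-α - 1) (x - p))) := by
          refine lintegral_congr fun m => ?_
          rw [Measure.volume_eq_prod, lintegral_prod _ (by fun_prop)]
          simp_rw [hb]
          rw [lintegral_const_mul _ (by fun_prop), lintegral_const_mul _ (by fun_prop),
            lintegral_ekap_left (by linarith) hpx,
            show -(-α - 2) - 1 = α + 1 by ring, show -α - 2 + 1 = -α - 1 by ring]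
      _ = _ := by
          rw [lintegral_mul_const _ (by fun_prop), lintegral_window hpx,
            ENNReal.ofReal_mul (by positivity)]
          calc _ = ENNReal.ofReal (1 / (α + 2)) * ENNReal.ofReal (1 / (α + 1)) *
                (ekap 1 (x - p) * ekap (-α - 1) (x - p)) := by ring
            _ = _ := by rw [ekap_mul]; congr 2; ring
  · rw [ekap_of_nonpos _ (by linarith), mul_zero]
    refine (lintegral_congr fun y => ?_).trans lintegral_zero
    rcases lt_or_ge p y.1 with hm | hm
    · rw [ekap_of_nonpos 0 (by linarith : x - y.1 ≤ 0)]; simp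
    · rw [ekap_of_nonpos 0 (by linarith : y.1 - p ≤ 0)]; simp

lemma measurable_conf (α : ℝ) :
    Measurable fun z : (ℝ × ℝ) × (ℝ × ℝ × ℝ) => conf α z.1.1 z.1.2 z.2 := by
  unfold conf; fun_prop

lemma measurable_conf' (α p x : ℝ) : Measurable (conf α p x) := by
  change Measurable fun y => conf α p x y
  unfold conf; fun_prop

lemma integral_conf {α : ℝ} (hα : α ∈ Ioo (0:ℝ) 1) (p x : ℝ) :
    ∫ y, ((conf α p x y : ℝ) : ℂ)
      = ((1 / (α + 2) * (1 / (α + 1)) * kap (-α) (x - p) : ℝ) : ℂ) := by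
  have h0 := hα.1
  have hm := measurable_conf' α p x
  rw [integral_complex_ofReal, integral_eq_lintegral_of_nonneg_ae
    (Eventually.of_forall fun y => conf_nonneg α p x y) hm.aestronglyMeasurable,
    lintegral_conf hα, ENNReal.toReal_mul, ENNReal.toReal_ofReal (by positivity), ekap,
    ENNReal.toReal_ofReal (kap_nonneg _ _)]

namespace IsPrim

lemma abs_conv {G U : ℝ → ℂ} (h : IsPrim G U) {α : ℝ} (hα : α ∈ Ioo (0:ℝ) 1) :
    ∫⁻ z : ℝ × ℝ, ekap (-α) (z.2 - z.1) * (‖G z.1‖ₑ * ‖G z.2‖ₑ) < ⊤ := by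
  have hm := h.measG
  have hα' := hα.2
  have hz : ∀ t, t ∉ Ioc (0:ℝ) 1 → ‖G t‖ₑ = 0 := fun t ht => by simp [h.supp t ht]
  rw [Measure.volume_eq_prod, lintegral_prod _ (by fun_prop)]
  calc _ = ∫⁻ p in Ioo (0:ℝ) 1, ∫⁻ x in Ioo (0:ℝ) 1,
        ekap (-α) (x - p) * (‖G p‖ₑ * ‖G x‖ₑ) := by
        rw [lintegral_eq_of_supp]
        · refine lintegral_congr fun p => ?_
          rw [lintegral_eq_of_supp]
          intro t ht; simp [hz t ht]
        · intro t ht; simp [hz t ht]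
    _ ≤ ∫⁻ p in Ioo (0:ℝ) 1, ∫⁻ x in Ioo (0:ℝ) 1,
        (ekap (-α) (x - p) * ‖G p‖ₑ ^ 2 + ekap (-α) (x - p) * ‖G x‖ₑ ^ 2) := by
        gcongr with p x
        rw [← mul_add]
        gcongr
        refine le_trans ?_ (two_mul_le_sq _ _)
        rw [two_mul]; exact le_self_add
    _ = (∫⁻ p in Ioo (0:ℝ) 1, ∫⁻ x in Ioo (0:ℝ) 1, ekap (-α) (x - p) * ‖G p‖ₑ ^ 2)
      + ∫⁻ x in Ioo (0:ℝ) 1, ∫⁻ p in Ioo (0:ℝ) 1, ekap (-α) (x - p) * ‖G x‖ₑ ^ 2 := by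
        have m1 : Measurable fun z : ℝ × ℝ => ekap (-α) (z.2 - z.1) * ‖G z.1‖ₑ ^ 2 := by fun_prop
        rw [lintegral_lintegral_swap (f := fun x p => ekap (-α) (x - p) * ‖G x‖ₑ ^ 2) (by fun_prop),
          ← lintegral_add_left m1.lintegral_prod_right']
        refine lintegral_congr fun p => ?_
        rw [lintegral_add_left (by fun_prop)]
    _ ≤ (∫⁻ p in Ioo (0:ℝ) 1, mass (-α) * ‖G p‖ₑ ^ 2)
      + ∫⁻ x in Ioo (0:ℝ) 1, mass (-α) * ‖G x‖ₑ ^ 2 := by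
        refine add_le_add (setLIntegral_mono' measurableSet_Ioo fun p hp => ?_)
          (setLIntegral_mono' measurableSet_Ioo fun x hx => ?_)
        · rw [lintegral_mul_const _ (by fun_prop)]
          gcongr; exact lintegral_ekap_sub_right_le _ hp.1.le
        · rw [lintegral_mul_const _ (by fun_prop)]
          gcongr; exact lintegral_ekap_sub_left_le _ hx.2.le
    _ ≤ mass (-α) * (∫⁻ p, ‖G p‖ₑ ^ 2) + mass (-α) * ∫⁻ p, ‖G p‖ₑ ^ 2 := by
        rw [lintegral_const_mul _ (by fun_prop)]
        gcongr <;> exact Measure.restrict_le_self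
    _ < ⊤ := by
        have h1 := mass_lt_top (γ := -α) (by linarith)
        have h2 := h.sq.lt_top
        finiteness

lemma integrable_form {G U : ℝ → ℂ} (h : IsPrim G U) {α : ℝ} (hα : α ∈ Ioo (0:ℝ) 1) :
    Integrable fun z : ℝ × ℝ =>
      (kap (-α) (z.2 - z.1) : ℂ) * (G z.1 * starRingEnd ℂ (G z.2)) := by
  have hm := h.measG
  have hc : Measurable (starRingEnd ℂ) := Complex.continuous_conj.measurable
  refine ⟨by fun_prop, ?_⟩
  unfold HasFiniteIntegral
  simp_rw [enorm_mul, enorm_kap, RCLike.enorm_conj]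
  exact h.abs_conv hα

/-- The quadratic form of fractional integration of order `1 - α`, evaluated at the derivative of
`U`, is bounded by the Gagliardo seminorm of `U`. -/
lemma form_bound {α : ℝ} (hα : α ∈ Ioo (0:ℝ) 1) : ∃ C : ENNReal, C ≠ ⊤ ∧ ∀ G U : ℝ → ℂ,
    IsPrim G U →
    ‖∫ z : ℝ × ℝ, (kap (-α) (z.2 - z.1) : ℂ) * (G z.1 * starRingEnd ℂ (G z.2))‖ₑ
      ≤ C * gag α U := by
  obtain ⟨C, hC, hb⟩ := triple_bound hα
  have h0 := hα.1
  set c : ℝ := 1 / (α + 2) * (1 / (α + 1)) with hc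
  have hcpos : 0 < c := by positivity
  refine ⟨ENNReal.ofReal c⁻¹ * C, by finiteness, fun G U h => ?_⟩
  have hm := h.measG
  have hmU := h.measU
  have hconj : Measurable (starRingEnd ℂ) := Complex.continuous_conj.measurable
  set F : ℝ × ℝ → ℝ × ℝ × ℝ → ℂ := fun z y =>
    (conf α z.1 z.2 y : ℂ) * (G z.1 * starRingEnd ℂ (G z.2)) with hF
  have hFm : Measurable (Function.uncurry F) := by
    have h1 := measurable_conf α
    have h2 : Measurable fun q : (ℝ × ℝ) × (ℝ × ℝ × ℝ) => ((conf α q.1.1 q.1.2 q.2 : ℝ) : ℂ) := by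
      fun_prop
    exact h2.mul (by fun_prop)
  have hconf : ∀ p x y, ‖((conf α p x y : ℝ) : ℂ)‖ₑ = ENNReal.ofReal (conf α p x y) := by
    intro p x y
    rw [← ofReal_norm, Complex.norm_real, Real.norm_of_nonneg (conf_nonneg _ _ _ _)]
  have hint : Integrable (Function.uncurry F) (volume.prod volume) := by
    refine ⟨hFm.aestronglyMeasurable, ?_⟩
    unfold HasFiniteIntegral
    rw [lintegral_prod _ (by fun_prop)]
    simp only [Function.uncurry, hF, enorm_mul, hconf, RCLike.enorm_conj]
    calc _ = ∫⁻ z : ℝ × ℝ, ENNReal.ofReal c * (ekap (-α) (z.2 - z.1) * (‖G z.1‖ₑ * ‖G z.2‖ₑ)) := by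
          refine lintegral_congr fun z => ?_
          rw [lintegral_mul_const _
            (measurable_conf' α z.1 z.2).ennreal_ofReal, lintegral_conf hα]
          ring
      _ < ⊤ := by
          rw [lintegral_const_mul _ (by fun_prop)]
          exact ENNReal.mul_lt_top ENNReal.ofReal_lt_top (h.abs_conv hα)
  have hswap := integral_integral_swap hint
  have hlhs : ∫ z, ∫ y, F z y
      = (c : ℂ) * ∫ z : ℝ × ℝ, (kap (-α) (z.2 - z.1) : ℂ) * (G z.1 * starRingEnd ℂ (G z.2)) := by
    rw [← integral_const_mul]
    refine integral_congr_ae (Eventually.of_forall fun z => ?_)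
    simp only [hF]
    rw [integral_mul_const, integral_conf hα, ← hc]
    push_cast
    ring
  have hrhs : ∀ y, ∫ z, F z y = (kap (-α - 3) (y.2.2 - y.2.1) : ℂ) *
      (((kap 0 (y.1 - y.2.1) : ℂ) * (U y.1 - U y.2.1)) *
        starRingEnd ℂ ((kap 0 (y.2.2 - y.1) : ℂ) * (U y.2.2 - U y.1))) := by
    intro y
    rw [← h.integral_window, ← h.integral_window, ← integral_conj, Measure.volume_eq_prod,
      ← integral_prod_mul, ← integral_const_mul]
    refine integral_congr_ae (Eventually.of_forall fun z => ?_)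
    simp only [hF, conf, map_mul, Complex.conj_ofReal]
    push_cast
    -- `kap 0 (p - a) * kap 0 (m - p)` and `kap 0 (x - m) * kap 0 (b - x)` are the two windows
    ring
  have hfin : ENNReal.ofReal c *
      ‖∫ z : ℝ × ℝ, (kap (-α) (z.2 - z.1) : ℂ) * (G z.1 * starRingEnd ℂ (G z.2))‖ₑ
      ≤ C * gag α U := by
    calc _ = ‖∫ y, ∫ z, F z y‖ₑ := by
          rw [← hswap, hlhs, enorm_mul]
          congr 1
          rw [← ofReal_norm, Complex.norm_real, Real.norm_of_nonneg hcpos.le]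
      _ ≤ ∫⁻ y : ℝ × ℝ × ℝ, ekap (-α - 3) (y.2.2 - y.2.1) *
          ((ekap 0 (y.1 - y.2.1) * ‖U y.1 - U y.2.1‖ₑ) *
            (ekap 0 (y.2.2 - y.1) * ‖U y.2.2 - U y.1‖ₑ)) := by
          refine (enorm_integral_le_lintegral_enorm _).trans (le_of_eq ?_)
          refine lintegral_congr fun y => ?_
          rw [hrhs]
          simp only [enorm_mul, enorm_kap, RCLike.enorm_conj]
      _ = ∫⁻ m, ∫⁻ a, ∫⁻ b, ekap (-α - 3) (b - a) * ((ekap 0 (m - a) * ‖U m - U a‖ₑ) *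
          (ekap 0 (b - m) * ‖U b - U m‖ₑ)) := by
          rw [Measure.volume_eq_prod, lintegral_prod _ (by fun_prop)]
          refine lintegral_congr fun m => ?_
          rw [Measure.volume_eq_prod, lintegral_prod _ (by fun_prop)]
      _ ≤ _ := hb G U h
  calc _ = ENNReal.ofReal c⁻¹ * (ENNReal.ofReal c *
      ‖∫ z : ℝ × ℝ, (kap (-α) (z.2 - z.1) : ℂ) * (G z.1 * starRingEnd ℂ (G z.2))‖ₑ) := by
        rw [← mul_assoc, ← ENNReal.ofReal_mul (by positivity), inv_mul_cancel₀ hcpos.ne']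
        simp
    _ ≤ ENNReal.ofReal c⁻¹ * (C * gag α U) := by gcongr
    _ = _ := by ring

end IsPrim

/-! ### Riemann–Liouville integrals and integration by parts -/

/-- The Riemann–Liouville integral of order `α` of a function `v` supported in `(0, 1]`, cut off
outside `(0, 1]`. -/
noncomputable def rl (α : ℝ) (v : ℝ → ℂ) : ℝ → ℂ := (Ioc (0:ℝ) 1).indicator fun x =>
  (((Real.Gamma α)⁻¹ : ℝ) : ℂ) * ∫ p, (kap (α - 1) (x - p) : ℂ) * v p

lemma measurable_rl (α : ℝ) {v : ℝ → ℂ} (hv : Measurable v) : Measurable (rl α v) := by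
  refine Measurable.indicator (Measurable.const_mul ?_ _) measurableSet_Ioc
  have h : Measurable fun z : ℝ × ℝ => (kap (α - 1) (z.1 - z.2) : ℂ) * v z.2 := by fun_prop
  exact (h.stronglyMeasurable.integral_prod_right (ν := volume)).measurable

lemma fracInt_eq_rl {α : ℝ} (hα : α ∈ Ioo (0:ℝ) 1) {w v : ℝ → ℂ}
    (hv0 : ∀ t, t ∉ Ioc (0:ℝ) 1 → v t = 0) (hwv : ∀ᵐ t, t ∈ Ioc (0:ℝ) 1 → w t = v t)
    {x : ℝ} (hx : x ∈ Ioc (0:ℝ) 1) : fracInt α w x = rl α v x := by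
  rw [fracInt, if_neg hα.1.ne', rl, indicator_of_mem hx, Complex.real_smul,
    intervalIntegral.integral_of_le hx.1.le, ← integral_indicator measurableSet_Ioc]
  congr 1
  refine integral_congr_ae ?_
  filter_upwards [hwv] with p hp
  by_cases h : p ∈ Ioc 0 x
  · rw [indicator_of_mem h, hp ⟨h.1, h.2.trans hx.2⟩]
    rcases h.2.lt_or_eq with h2 | h2
    · rw [kap_of_pos _ (by linarith)]
    · -- the value `0 ^ (α - 1)` at the endpoint `p = x` is the junk value `0`
      rw [h2, sub_self, Real.zero_rpow (by linarith [hα.2]), kap_of_nonpos _ le_rfl]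
  · rw [indicator_of_notMem h]
    rcases lt_or_ge 0 p with h1 | h1
    · rw [kap_of_nonpos]
      · simp
      · by_contra h2
        exact h ⟨h1, by linarith⟩
    · rw [hv0 p fun h' => by linarith [h'.1], mul_zero]

/-- `I^α` maps `L²(0,1)` to `L²(0,1)`. -/
lemma rl_sq_lt_top {α : ℝ} (hα : α ∈ Ioo (0:ℝ) 1) {v : ℝ → ℂ} (hv : Measurable v)
    (hv0 : ∀ t, t ∉ Ioc (0:ℝ) 1 → v t = 0) (hsq : ∫⁻ t, ‖v t‖ₑ ^ 2 ≠ ⊤) :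
    ∫⁻ t, ‖rl α v t‖ₑ ^ 2 < ⊤ := by
  set c : ENNReal := ‖(((Real.Gamma α)⁻¹ : ℝ) : ℂ)‖ₑ
  have hc : c < ⊤ := enorm_lt_top
  have hM := mass_lt_top (γ := α - 1) (by linarith [hα.1])
  calc ∫⁻ t, ‖rl α v t‖ₑ ^ 2 = ∫⁻ x in Ioo (0:ℝ) 1, ‖rl α v x‖ₑ ^ 2 :=
        lintegral_eq_of_supp fun t ht => by simp [rl, indicator_of_notMem ht]
    _ ≤ ∫⁻ x in Ioo (0:ℝ) 1, c ^ 2 * (mass (α - 1) *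
        ∫⁻ p in Ioo (0:ℝ) 1, ekap (α - 1) (x - p) * ‖v p‖ₑ ^ 2) := by
        refine setLIntegral_mono' measurableSet_Ioo fun x hx => ?_
        rw [rl, indicator_of_mem (Ioo_subset_Ioc_self hx), enorm_mul, mul_pow]
        gcongr
        calc _ ≤ (∫⁻ p in Ioo (0:ℝ) 1, ekap (α - 1) (x - p) * ‖v p‖ₑ) ^ 2 := by
              gcongr
              refine (enorm_integral_le_lintegral_enorm _).trans (le_of_eq ?_)
              simp only [enorm_mul, enorm_kap]
              exact lintegral_eq_of_supp fun t ht => by simp [hv0 t ht]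
          _ ≤ _ := lintegral_mul_sq_le (by fun_prop) (by fun_prop)
          _ ≤ _ := by gcongr; exact lintegral_ekap_sub_left_le _ hx.2.le
    _ = c ^ 2 * (mass (α - 1) * ∫⁻ p in Ioo (0:ℝ) 1, ∫⁻ x in Ioo (0:ℝ) 1,
          ekap (α - 1) (x - p) * ‖v p‖ₑ ^ 2) := by
        have m : Measurable fun z : ℝ × ℝ => ekap (α - 1) (z.1 - z.2) * ‖v z.2‖ₑ ^ 2 := by fun_prop
        have m' : Measurable fun x => ∫⁻ p in Ioo (0:ℝ) 1, ekap (α - 1) (x - p) * ‖v p‖ₑ ^ 2 :=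
          m.lintegral_prod_right'
        rw [lintegral_const_mul _ (m'.const_mul _), lintegral_const_mul _ m',
          lintegral_lintegral_swap (by fun_prop)]
    _ ≤ c ^ 2 * (mass (α - 1) * ∫⁻ p in Ioo (0:ℝ) 1, mass (α - 1) * ‖v p‖ₑ ^ 2) := by
        gcongr _ * (_ * ?_)
        refine setLIntegral_mono' measurableSet_Ioo fun p hp => ?_
        rw [lintegral_mul_const _ (by fun_prop)]
        gcongr
        exact lintegral_ekap_sub_right_le _ hp.1.le
    _ ≤ c ^ 2 * (mass (α - 1) * (mass (α - 1) * ∫⁻ p, ‖v p‖ₑ ^ 2)) := by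
        rw [lintegral_const_mul _ (by fun_prop)]
        gcongr
        exact Measure.restrict_le_self
    _ < ⊤ := by have := hsq.lt_top; finiteness

lemma integrable_of_sq {v : ℝ → ℂ} (hv : Measurable v)
    (hv0 : ∀ t, t ∉ Ioc (0:ℝ) 1 → v t = 0) (hsq : ∫⁻ t, ‖v t‖ₑ ^ 2 ≠ ⊤) : Integrable v := by
  refine ⟨hv.aestronglyMeasurable, ?_⟩
  unfold HasFiniteIntegral
  rw [lintegral_eq_of_supp fun t ht => by simp [hv0 t ht]]
  calc _ ≤ ∫⁻ t in Ioo (0:ℝ) 1, (1 + ‖v t‖ₑ ^ 2) := by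
        gcongr with t
        have h := two_mul_le_sq 1 ‖v t‖ₑ
        rw [one_mul, one_pow, two_mul] at h
        exact le_self_add.trans h
    _ ≤ 1 + ∫⁻ t, ‖v t‖ₑ ^ 2 := by
        rw [lintegral_add_left measurable_const]
        gcongr
        · simp
        · exact Measure.restrict_le_self
    _ < ⊤ := by have := hsq.lt_top; finiteness

lemma integral_beta {α : ℝ} (hα : α ∈ Ioo (0:ℝ) 1) (q x : ℝ) :
    ∫ p, ((kap (-α) (x - p) * kap (α - 1) (p - q) : ℝ) : ℂ)
      = ((ProbabilityTheory.beta α (1 - α) * kap 0 (x - q) : ℝ) : ℂ) := by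
  have hb := ProbabilityTheory.beta_pos hα.1 (sub_pos.2 hα.2)
  have hm : Measurable fun p => kap (-α) (x - p) * kap (α - 1) (p - q) := by fun_prop
  have e : ∀ p, ENNReal.ofReal (kap (-α) (x - p) * kap (α - 1) (p - q))
      = ekap (-α) (x - p) * ekap (α - 1) (p - q) := fun p => by
    rw [ENNReal.ofReal_mul (kap_nonneg _ _), ekap, ekap]
  rw [integral_complex_ofReal, integral_eq_lintegral_of_nonneg_ae
    (Eventually.of_forall fun p => mul_nonneg (kap_nonneg _ _) (kap_nonneg _ _))
    hm.aestronglyMeasurable]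
  simp_rw [e]
  rw [lintegral_beta hα, ENNReal.toReal_mul, ENNReal.toReal_ofReal hb.le, ekap,
    ENNReal.toReal_ofReal (kap_nonneg _ _)]

/-- The semigroup law `I^(1-α) I^α v = I¹ v`, up to normalising constants. -/
lemma integral_kap_rl {α : ℝ} (hα : α ∈ Ioo (0:ℝ) 1) {v : ℝ → ℂ} (hv : Measurable v)
    (hv0 : ∀ t, t ∉ Ioc (0:ℝ) 1 → v t = 0) (hint : Integrable v) {t : ℝ} (ht : t ≤ 1) :
    ∫ p, (kap (-α) (t - p) : ℂ) * rl α v p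
      = (((Real.Gamma α)⁻¹ * ProbabilityTheory.beta α (1 - α) : ℝ) : ℂ) *
        ∫ q, (kap 0 (t - q) : ℂ) * v q := by
  have hdrop : ∀ p, (kap (-α) (t - p) : ℂ) * rl α v p = (((Real.Gamma α)⁻¹ : ℝ) : ℂ) *
      ∫ q, ((kap (-α) (t - p) * kap (α - 1) (p - q) : ℝ) : ℂ) * v q := by
    intro p
    have e : ∫ q, ((kap (-α) (t - p) * kap (α - 1) (p - q) : ℝ) : ℂ) * v q
        = (kap (-α) (t - p) : ℂ) * ∫ q, (kap (α - 1) (p - q) : ℂ) * v q := by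
      rw [← integral_const_mul]
      refine integral_congr_ae (Eventually.of_forall fun q => ?_)
      push_cast; ring
    rw [e, rl]
    by_cases hp : p ∈ Ioc (0:ℝ) 1
    · rw [indicator_of_mem hp]; ring
    · rw [indicator_of_notMem hp, mul_zero]
      rcases lt_or_ge 0 p with h1 | h1
      · have h2 : 1 < p := by
          by_contra h2
          exact hp ⟨h1, not_lt.1 h2⟩
        rw [kap_of_nonpos (-α) (by linarith)]; simp
      · have h2 : ∀ q, (kap (α - 1) (p - q) : ℂ) * v q = 0 := by
          intro q
          by_cases hq : q ∈ Ioc (0:ℝ) 1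
          · rw [kap_of_nonpos _ (by linarith [hq.1])]; simp
          · rw [hv0 q hq, mul_zero]
        simp_rw [h2]; simp
  simp_rw [hdrop]
  have hF : Integrable (Function.uncurry fun p q : ℝ =>
      ((kap (-α) (t - p) * kap (α - 1) (p - q) : ℝ) : ℂ) * v q) (volume.prod volume) := by
    refine ⟨by fun_prop, ?_⟩
    unfold HasFiniteIntegral
    rw [lintegral_prod_symm _ (by fun_prop)]
    simp only [Function.uncurry, Complex.ofReal_mul, enorm_mul, enorm_kap]
    calc _ = ∫⁻ q, ENNReal.ofReal (ProbabilityTheory.beta α (1 - α)) *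
          (ekap 0 (t - q) * ‖v q‖ₑ) := by
          refine lintegral_congr fun q => ?_
          rw [lintegral_mul_const _ (by fun_prop), lintegral_beta hα, mul_assoc]
      _ ≤ ENNReal.ofReal (ProbabilityTheory.beta α (1 - α)) * ∫⁻ q, ‖v q‖ₑ := by
          rw [lintegral_const_mul _ (by fun_prop)]
          gcongr with q
          rcases lt_or_ge 0 (t - q) with h | h
          · rw [ekap_zero_of_pos h, one_mul]
          · rw [ekap_of_nonpos _ h, zero_mul]; exact zero_le
      _ < ⊤ := ENNReal.mul_lt_top ENNReal.ofReal_lt_top hint.2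
  rw [integral_const_mul, integral_integral_swap hF, Complex.ofReal_mul, mul_assoc]
  congr 1
  rw [← integral_const_mul]
  refine integral_congr_ae (Eventually.of_forall fun q => ?_)
  simp only
  rw [integral_mul_const, integral_beta hα]
  push_cast; ring

/-- Integration by parts: `⟨v, U⟩ = -⟨I¹ v, U'⟩`, with `U' = I^α v` and `I¹ v = I^(1-α) U'`. -/
lemma form_identity {α : ℝ} (hα : α ∈ Ioo (0:ℝ) 1) {v U : ℝ → ℂ} (hv : Measurable v)
    (hv0 : ∀ t, t ∉ Ioc (0:ℝ) 1 → v t = 0) (hint : Integrable v)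
    (hU : IsPrim (rl α v) U) (hU1 : U 1 = 0) :
    (((Real.Gamma α)⁻¹ * ProbabilityTheory.beta α (1 - α) : ℝ) : ℂ) *
        ∫ x, v x * starRingEnd ℂ (U x)
      = -∫ z : ℝ × ℝ, (kap (-α) (z.2 - z.1) : ℂ) *
          (rl α v z.1 * starRingEnd ℂ (rl α v z.2)) := by
  set G := rl α v with hG
  have hGm := hU.measG
  have hconj : Measurable (starRingEnd ℂ) := Complex.continuous_conj.measurable
  have hUx : ∀ x ∈ Ioc (0:ℝ) 1,
      starRingEnd ℂ (U x) = -∫ t, (kap 0 (t - x) : ℂ) * starRingEnd ℂ (G t) := by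
    intro x hx
    have h1 := hU.integral_window x 2
    have h2 := hU.const_right (m := 1) (b := 2) (by norm_num) le_rfl
    rw [kap_of_pos _ (by linarith [hx.2]), Real.rpow_zero, sub_eq_zero.1 h2, hU1,
      Complex.ofReal_one, one_mul, zero_sub] at h1
    rw [← neg_eq_iff_eq_neg, ← map_neg, ← h1, ← integral_conj]
    refine integral_congr_ae (Eventually.of_forall fun t => ?_)
    simp only [map_mul, Complex.conj_ofReal]
    by_cases ht : t ∈ Ioc (0:ℝ) 1
    · rw [kap_of_pos 0 (by linarith [ht.2] : 0 < 2 - t)]; simp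
    · rw [hU.supp t ht]; simp
  have hF : Integrable (Function.uncurry fun x t : ℝ =>
      v x * ((kap 0 (t - x) : ℂ) * starRingEnd ℂ (G t))) (volume.prod volume) := by
    refine (hint.mul_prod hU.int).mono (by fun_prop) (Eventually.of_forall fun z => ?_)
    simp only [Function.uncurry, norm_mul, RCLike.norm_conj, Complex.norm_real]
    gcongr
    rcases lt_or_ge 0 (z.2 - z.1) with h | h
    · rw [kap_of_pos _ h]; simp
    · rw [kap_of_nonpos _ h]; simp
  have h1 : ∫ x, v x * starRingEnd ℂ (U x)
      = -∫ t, (∫ x, (kap 0 (t - x) : ℂ) * v x) * starRingEnd ℂ (G t) := by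
    calc _ = -∫ x, ∫ t, v x * ((kap 0 (t - x) : ℂ) * starRingEnd ℂ (G t)) := by
          rw [← integral_neg]
          refine integral_congr_ae (Eventually.of_forall fun x => ?_)
          simp only
          rw [integral_const_mul]
          by_cases hx : x ∈ Ioc (0:ℝ) 1
          · rw [hUx x hx]; ring
          · rw [hv0 x hx]; simp
      _ = _ := by
          rw [integral_integral_swap hF]
          congr 1
          refine integral_congr_ae (Eventually.of_forall fun t => ?_)
          simp only
          rw [← integral_mul_const]
          refine integral_congr_ae (Eventually.of_forall fun x => ?_)
          simp only
          ring
  have hf := hU.integrable_form hα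
  rw [Measure.volume_eq_prod] at hf
  rw [h1, Measure.volume_eq_prod, integral_prod_symm _ hf, mul_neg, ← integral_const_mul]
  congr 1
  refine integral_congr_ae (Eventually.of_forall fun t => ?_)
  simp only
  by_cases ht : t ∈ Ioc (0:ℝ) 1
  · rw [← mul_assoc, ← integral_kap_rl hα hv hv0 hint ht.2, ← integral_mul_const]
    refine integral_congr_ae (Eventually.of_forall fun p => ?_)
    simp only
    ring
  · rw [hU.supp t ht]; simp

/-! ### Passage to the Sobolev norm and conclusion -/

lemma sobSeminormSq_nonneg (s : ℝ) (u : ℝ → ℂ) : 0 ≤ sobSeminormSq s u :=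
  intervalIntegral.integral_nonneg zero_le_one fun _ _ =>
    intervalIntegral.integral_nonneg zero_le_one fun _ _ => by positivity

lemma L2normSq_nonneg (u : ℝ → ℂ) : 0 ≤ L2normSq u :=
  intervalIntegral.integral_nonneg zero_le_one fun _ _ => by positivity

/-- Finiteness of `gag` makes the Gagliardo integrand integrable on the square, so that the iterated
Bochner integral defining `sobSeminormSq` is a genuine one. -/
lemma gag_le_sobSeminormSq {α : ℝ} {u U : ℝ → ℂ} (hU : Measurable U)
    (huU : ∀ x ∈ Icc (0:ℝ) 1, u x = U x) (hfin : gag α U < ⊤) :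
    gag α U ≤ ENNReal.ofReal (sobSeminormSq ((1 + α) / 2) u) := by
  set μ : Measure ℝ := volume.restrict (Ioo (0:ℝ) 1) with hμ
  set K : ℝ × ℝ → ℝ := fun z => ‖U z.1 - U z.2‖ ^ 2 / |z.1 - z.2| ^ (2 + α) with hK
  have hKm : Measurable K := by fun_prop
  have hK0 : ∀ z, 0 ≤ K z := fun z => by positivity
  have hKe : ∀ x y, ENNReal.ofReal (K (x, y)) = ekap (-α - 2) (x - y) * ‖U x - U y‖ₑ ^ 2
      + ekap (-α - 2) (y - x) * ‖U y - U x‖ₑ ^ 2 := by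
    have e : ∀ x y, y < x → ENNReal.ofReal (K (x, y))
        = ekap (-α - 2) (x - y) * ‖U x - U y‖ₑ ^ 2 := by
      intro x y h
      have h' : 0 < x - y := by linarith
      rw [ekap_of_pos _ h', ← ofReal_norm, ← ENNReal.ofReal_pow (norm_nonneg _),
        ← ENNReal.ofReal_mul (by positivity), show -α - 2 = -(2 + α) by ring,
        Real.rpow_neg h'.le]
      simp only [hK]
      rw [abs_of_pos h', div_eq_mul_inv, mul_comm]
    intro x y
    rcases lt_trichotomy x y with h | h | h
    · have hs : K (x, y) = K (y, x) := by simp only [hK]; rw [norm_sub_rev, abs_sub_comm]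
      rw [hs, e y x h, ekap_of_nonpos _ (by linarith : x - y ≤ 0)]; simp
    · subst h; simp [hK]
    · rw [e x y h, ekap_of_nonpos _ (by linarith : y - x ≤ 0)]; simp
  have hsum : ∫⁻ z, ENNReal.ofReal (K z) ∂(μ.prod μ) = gag α U + gag α U := by
    have m1 : Measurable fun z : ℝ × ℝ => ekap (-α - 2) (z.1 - z.2) * ‖U z.1 - U z.2‖ₑ ^ 2 := by
      fun_prop
    rw [lintegral_prod _ (by fun_prop)]
    simp_rw [hKe]
    calc _ = ∫⁻ x, (∫⁻ y, ekap (-α - 2) (x - y) * ‖U x - U y‖ₑ ^ 2 ∂μ)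
          + ∫⁻ y, ekap (-α - 2) (y - x) * ‖U y - U x‖ₑ ^ 2 ∂μ ∂μ :=
          lintegral_congr fun x => lintegral_add_left (by fun_prop) _
      _ = _ := by
          rw [lintegral_add_left (by exact m1.lintegral_prod_right')]
          congr 1
          rw [lintegral_lintegral_swap (by fun_prop)]
          rfl
  have hKint : Integrable K (μ.prod μ) := by
    refine ⟨hKm.aestronglyMeasurable, ?_⟩
    rw [hasFiniteIntegral_iff_ofReal (Eventually.of_forall hK0), hsum]
    exact ENNReal.add_lt_top.2 ⟨hfin, hfin⟩
  have hsob : sobSeminormSq ((1 + α) / 2) u = ∫ z, K z ∂(μ.prod μ) := by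
    rw [integral_prod _ hKint, sobSeminormSq, intervalIntegral.integral_of_le zero_le_one,
      ← Measure.restrict_congr_set Ioo_ae_eq_Ioc]
    refine setIntegral_congr_fun measurableSet_Ioo fun x hx => ?_
    rw [intervalIntegral.integral_of_le zero_le_one, ← Measure.restrict_congr_set Ioo_ae_eq_Ioc]
    refine setIntegral_congr_fun measurableSet_Ioo fun y hy => ?_
    simp only [hK]
    rw [huU x (Ioo_subset_Icc_self hx), huU y (Ioo_subset_Icc_self hy),
      show 1 + 2 * ((1 + α) / 2) = 2 + α by ring]
  rw [hsob, ofReal_integral_eq_lintegral_ofReal hKint (Eventually.of_forall hK0), hsum]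
  exact le_self_add

/-- A function in `L²(0,1)` agrees almost everywhere on `(0, 1]` with a measurable one vanishing
outside `(0, 1]`. -/
lemma SqIntOn.exists_measurable {w : ℝ → ℂ} (hw : SqIntOn w) : ∃ v : ℝ → ℂ, Measurable v ∧
    (∀ t, t ∉ Ioc (0:ℝ) 1 → v t = 0) ∧ (∀ᵐ t, t ∈ Ioc (0:ℝ) 1 → w t = v t) ∧
    ∫⁻ t, ‖v t‖ₑ ^ 2 ≠ ⊤ := by
  obtain ⟨hm, hi⟩ := hw
  have hae : ∀ᵐ t, t ∈ Ioc (0:ℝ) 1 → w t = (Ioc (0:ℝ) 1).indicator (hm.mk w) t := by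
    have := (ae_restrict_iff' measurableSet_Ioc).1 hm.ae_eq_mk
    filter_upwards [this] with t ht h
    rw [indicator_of_mem h, ht h]
  refine ⟨(Ioc (0:ℝ) 1).indicator (hm.mk w),
    hm.stronglyMeasurable_mk.measurable.indicator measurableSet_Ioc,
    fun t ht => indicator_of_notMem ht _, hae, ?_⟩
  have h2 := hi.2
  unfold HasFiniteIntegral at h2
  refine (lt_of_eq_of_lt ?_ h2).ne
  rw [← lintegral_indicator measurableSet_Ioc]
  refine lintegral_congr_ae ?_
  filter_upwards [hae] with t ht
  by_cases h : t ∈ Ioc (0:ℝ) 1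
  · rw [← ht h, indicator_of_mem h, enorm_pow, enorm_norm]
  · simp [indicator_of_notMem h]

/-- A pair in the graph of `A` is, up to modification of `w` on a null set and extension of `u` by
constants, a pair `v`, `U` with `U' = I^α v` on the whole line. -/
lemma InGraphA.exists_isPrim {α : ℝ} (hα : α ∈ Ioo (0:ℝ) 1) {u w : ℝ → ℂ} (h : InGraphA α u w) :
    ∃ v U : ℝ → ℂ, Measurable v ∧ (∀ t, t ∉ Ioc (0:ℝ) 1 → v t = 0) ∧ Integrable v ∧
      (∀ᵐ t, t ∈ Ioc (0:ℝ) 1 → w t = v t) ∧ IsPrim (rl α v) U ∧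
      (∀ x ∈ Icc (0:ℝ) 1, u x = U x) ∧ U 1 = 0 := by
  obtain ⟨hu1, hw, hi, hu⟩ := h
  obtain ⟨v, hv, hv0, hae, hsq⟩ := hw.exists_measurable
  have hfr : ∀ x ∈ Ioc (0:ℝ) 1, fracInt α w x = rl α v x := fun x hx =>
    fracInt_eq_rl hα hv0 hae hx
  have hG0 : ∀ t, t ∉ Ioc (0:ℝ) 1 → rl α v t = 0 := fun t ht => indicator_of_notMem ht _
  have hGm := measurable_rl α hv
  have hGsq := (rl_sq_lt_top hα hv hv0 hsq).ne
  have hGint := integrable_of_sq hGm hG0 hGsq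
  have huU : ∀ x ∈ Icc (0:ℝ) 1, u x = u 0 + ∫ t in (0:ℝ)..x, rl α v t := by
    intro x hx
    rw [hu x hx, intervalIntegral.integral_of_le hx.1, intervalIntegral.integral_of_le hx.1,
      setIntegral_congr_fun measurableSet_Ioc fun t ht => hfr t ⟨ht.1, ht.2.trans hx.2⟩]
  refine ⟨v, fun x => u 0 + ∫ t in (0:ℝ)..x, rl α v t, hv, hv0, integrable_of_sq hv hv0 hsq, hae,
    ⟨hGm, ?_, hG0, hGint, hGsq, fun a b _ => ?_⟩, huU, ?_⟩
  · exact (continuous_const.add (intervalIntegral.continuous_primitive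
      (fun a b => hGint.intervalIntegrable) 0)).measurable
  · rw [add_sub_add_left_eq_sub, intervalIntegral.integral_interval_sub_left] <;>
      exact hGint.intervalIntegrable
  · exact (huU 1 ⟨zero_le_one, le_rfl⟩).symm.trans hu1

/-- boundedness of the form (Au, u) by the square of the
H^{(1+a)/2}(0,1) norm. -/
theorem statement_2 (α : ℝ) (hα : α ∈ Set.Ioo (0:ℝ) 1) :
    ∃ b > (0:ℝ), ∀ u w : ℝ → ℂ, InGraphA α u w →
      ‖∫ x in (0:ℝ)..1, w x * (starRingEnd ℂ) (u x)‖ ≤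
        b * sobNormSq ((1 + α) / 2) u := by
  obtain ⟨C, hC, hform⟩ := IsPrim.form_bound hα
  set c : ℝ := (Real.Gamma α)⁻¹ * ProbabilityTheory.beta α (1 - α) with hc
  have hcpos : 0 < c := mul_pos (inv_pos.2 (Real.Gamma_pos_of_pos hα.1))
    (ProbabilityTheory.beta_pos hα.1 (sub_pos.2 hα.2))
  -- the summand `1` only serves to make the constant strictly positive
  refine ⟨c⁻¹ * C.toReal + 1, by positivity, fun u w h => ?_⟩
  obtain ⟨v, U, hv, hv0, hint, hae, hU, huU, hU1⟩ := h.exists_isPrim hα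
  have hs := sobSeminormSq_nonneg ((1 + α) / 2) u
  have hL := L2normSq_nonneg u
  have hint_eq : ∫ x in (0:ℝ)..1, w x * (starRingEnd ℂ) (u x) = ∫ x, v x * starRingEnd ℂ (U x) := by
    rw [intervalIntegral.integral_of_le zero_le_one, ← integral_indicator measurableSet_Ioc]
    refine integral_congr_ae ?_
    filter_upwards [hae] with x hx
    by_cases hx1 : x ∈ Ioc (0:ℝ) 1
    · rw [indicator_of_mem hx1, hx hx1, huU x (Ioc_subset_Icc_self hx1)]
    · rw [indicator_of_notMem hx1, hv0 x hx1, zero_mul]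
  have hid := form_identity hα hv hv0 hint hU hU1
  have hle := (hform _ U hU).trans
    (mul_le_mul_right (gag_le_sobSeminormSq hU.measU huU (hU.gag_lt_top hα)) C)
  rw [← enorm_neg, ← hid, ← hint_eq, ← hc, enorm_mul, ← ofReal_norm, ← ofReal_norm,
    Complex.norm_real, Real.norm_of_nonneg hcpos.le, ← ENNReal.ofReal_mul hcpos.le,
    ← ENNReal.ofReal_toReal hC, ← ENNReal.ofReal_mul ENNReal.toReal_nonneg,
    ENNReal.ofReal_le_ofReal_iff (by positivity)] at hle
  calc _ = c⁻¹ * (c * ‖∫ x in (0:ℝ)..1, w x * (starRingEnd ℂ) (u x)‖) := by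
        field_simp
    _ ≤ c⁻¹ * (C.toReal * sobSeminormSq ((1 + α) / 2) u) := by gcongr
    _ ≤ (c⁻¹ * C.toReal + 1) * sobNormSq ((1 + α) / 2) u := by
        have h1 : 0 ≤ c⁻¹ * C.toReal := by positivity
        rw [sobNormSq]
        nlinarith
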